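/- arXiv:2210.09280 — 2 statements merged into one kernel-verified Lean document; each statement's English description precedes it below -/
import Mathlib

section
/- Log-Rule for the disk. There is an absolute constant C ≥ 1 such that for all disjoint closed arcs I, J of the unit circle S¹, each of positive normalized arc length, with d := dist(I, J) > 0, the inner width W_D(I, J) over the closed unit disk D satisfies: if d ≤ min(|I|, |J|), then C⁻¹·(log(min(|I|,|J|)/d) + 1) ≤ W_D(I, J) ≤ C·(log(min(|I|,|J|)/d) + 1); and if d ≥ min(|I|, |J|), then C⁻¹·(log(d/min(|I|,|J|)) + 1)⁻¹ ≤ W_D(I, J) ≤ C·(log(d/min(|I|,|J|)) + 1)⁻¹. -/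
noncomputable section

open MeasureTheory Set Metric Bornology
open scoped ENNReal NNReal

/-- A curve: continuous on `[0,1]` and continuously differentiable on `(0,1)`. -/
def IsCurve (γ : ℝ → ℂ) : Prop :=
  ContinuousOn γ (Icc 0 1) ∧ ContDiffOn ℝ 1 γ (Ioo 0 1)

/-- The extremal width of a family of curves: the infimum of `∫ ρ² dA` over all Borel
measurable metrics `ρ : ℂ → [0,∞]` that give every curve of the family length at least `1`
(the infimum over the empty set being `∞`). -/
def extremalWidth (F : Set (ℝ → ℂ)) : ℝ≥0∞ :=
  ⨅ ρ ∈ {ρ : ℂ → ℝ≥0∞ | Measurable ρ ∧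
      ∀ γ ∈ F, 1 ≤ ∫⁻ t in Ioo (0:ℝ) 1, ρ (γ t) * (‖deriv γ t‖₊ : ℝ≥0∞)},
    ∫⁻ z, ρ z ^ 2

/-- The curves contained in `S`, starting in `X` and ending in `Y`. -/
def curveFamily (S X Y : Set ℂ) : Set (ℝ → ℂ) :=
  {γ : ℝ → ℂ | IsCurve γ ∧ (∀ t ∈ Icc (0:ℝ) 1, γ t ∈ S) ∧ γ 0 ∈ X ∧ γ 1 ∈ Y}

/-- The extremal width `W_S(X, Y)`. -/
def widthIn (S X Y : Set ℂ) : ℝ≥0∞ := extremalWidth (curveFamily S X Y)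

/-- The point `e^{2πit}` of the unit circle. -/
def unitCirc (t : ℝ) : ℂ := Complex.exp (2 * Real.pi * Complex.I * t)

/-- The Log-Rule bounds: `W ≍ log(m/d) + 1` when `d ≤ m`, and `W ≍ (log(d/m) + 1)⁻¹`
when `d ≥ m`, with comparison constant `C`. -/
def logBounds (C m d : ℝ) (W : ℝ≥0∞) : Prop :=
  (d ≤ m → ENNReal.ofReal (C⁻¹ * (Real.log (m / d) + 1)) ≤ W ∧
      W ≤ ENNReal.ofReal (C * (Real.log (m / d) + 1))) ∧
  (m ≤ d → ENNReal.ofReal (C⁻¹ * (Real.log (d / m) + 1)⁻¹) ≤ W ∧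
      W ≤ ENNReal.ofReal (C * (Real.log (d / m) + 1)⁻¹))

/-!
Upper bounds come from explicit metrics centred at a point `p` of the circle. If the shorter arc is
small compared with the gap, take `p` its midpoint and `|dz| / |z - p|` on the annulus between the
arcs. Otherwise cut it in half, take `p` the endpoint of a half next to a gap, and use
`|dz| / (|z - p| + d)`: the distance from `x` in that half to the other arc is at least of the
order of `|x - p| + d`.

Lower bounds come from a foliation. By Cauchy-Schwarz on each leaf, a family containing the leaves
`t ↦ Φ (u + it)` has width at least `∫ du / ∫ |∂ₜΦ|² / |det DΦ| dt`. In the upper half plane, which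
`z ↦ exp (2πiz)` maps to the punctured disk, use parabolic arcs joining `c - u` to `c + u`, `c`
being the midpoint of the shorter gap. With height of order `u` they give `log (m / d)` when
`d ≤ m`; when `m ≤ d`, letting the height vary with slope `R = d / m` in `u` spreads the leaves
apart away from their endpoints and gives `1 / log (d / m)`.
-/

/-- The `ρ`-length of `γ` on `(0, 1)`, the quantity that `extremalWidth` requires to be at least
`1` on every curve. -/
def metricLength (ρ : ℂ → ℝ≥0∞) (γ : ℝ → ℂ) : ℝ≥0∞ :=
  ∫⁻ t in Ioo (0 : ℝ) 1, ρ (γ t) * (‖deriv γ t‖₊ : ℝ≥0∞)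

section ExtremalWidth

theorem extremalWidth_le {F : Set (ℝ → ℂ)} {ρ : ℂ → ℝ≥0∞} (hρ : Measurable ρ)
    (h : ∀ γ ∈ F, 1 ≤ metricLength ρ γ) : extremalWidth F ≤ ∫⁻ z, ρ z ^ 2 :=
  iInf₂_le ρ ⟨hρ, h⟩

theorem le_extremalWidth {F : Set (ℝ → ℂ)} {w : ℝ≥0∞}
    (h : ∀ ρ : ℂ → ℝ≥0∞, Measurable ρ → (∀ γ ∈ F, 1 ≤ metricLength ρ γ) → w ≤ ∫⁻ z, ρ z ^ 2) :
    w ≤ extremalWidth F :=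
  le_iInf₂ fun ρ hρ => h ρ hρ.1 hρ.2

theorem extremalWidth_mono {F G : Set (ℝ → ℂ)} (h : F ⊆ G) :
    extremalWidth F ≤ extremalWidth G :=
  le_extremalWidth fun _ hρ hG => extremalWidth_le hρ fun γ hγ => hG γ (h hγ)

theorem metricLength_mono {ρ σ : ℂ → ℝ≥0∞} (h : ρ ≤ σ) (γ : ℝ → ℂ) :
    metricLength ρ γ ≤ metricLength σ γ :=
  lintegral_mono fun t => mul_le_mul_left (h (γ t)) _

theorem extremalWidth_union_le (F G : Set (ℝ → ℂ)) :
    extremalWidth (F ∪ G) ≤ extremalWidth F + extremalWidth G := by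
  refine ENNReal.le_iInf₂_add_iInf₂ fun ρ hρ σ hσ => ?_
  have hmeas : Measurable (ρ ⊔ σ) := hρ.1.sup hσ.1
  calc extremalWidth (F ∪ G)
      ≤ ∫⁻ z, (ρ ⊔ σ) z ^ 2 := by
        refine extremalWidth_le hmeas fun γ hγ => ?_
        rcases hγ with hγ | hγ
        · exact (hρ.2 γ hγ).trans (metricLength_mono le_sup_left γ)
        · exact (hσ.2 γ hγ).trans (metricLength_mono le_sup_right γ)
    _ ≤ ∫⁻ z, (ρ z ^ 2 + σ z ^ 2) := by
        refine lintegral_mono fun z => ?_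
        rcases le_total (ρ z) (σ z) with h | h <;> simp [h]
    _ = (∫⁻ z, ρ z ^ 2) + ∫⁻ z, σ z ^ 2 := lintegral_add_left (hρ.1.pow_const 2) _

theorem widthIn_mono {S S' X X' Y Y' : Set ℂ} (hS : S ⊆ S') (hX : X ⊆ X') (hY : Y ⊆ Y') :
    widthIn S X Y ≤ widthIn S' X' Y' :=
  extremalWidth_mono fun _ hγ => ⟨hγ.1, fun t ht => hS (hγ.2.1 t ht), hX hγ.2.2.1, hY hγ.2.2.2⟩

theorem widthIn_union_left_le (S X X' Y : Set ℂ) :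
    widthIn S (X ∪ X') Y ≤ widthIn S X Y + widthIn S X' Y := by
  refine (extremalWidth_mono ?_).trans (extremalWidth_union_le _ _)
  rintro γ ⟨hγ, hS, hX | hX', hY⟩
  exacts [.inl ⟨hγ, hS, hX, hY⟩, .inr ⟨hγ, hS, hX', hY⟩]

theorem setLIntegral_Ioo_zero_one_comp_sub_left (f : ℝ → ℝ≥0∞) :
    ∫⁻ t in Ioo (0 : ℝ) 1, f (1 - t) = ∫⁻ t in Ioo (0 : ℝ) 1, f t := by
  simpa using (Measure.measurePreserving_sub_left volume (1 : ℝ)).setLIntegral_comp_preimage_emb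
    (MeasurableEquiv.subLeft (1 : ℝ)).measurableEmbedding f (Ioo 0 1)

theorem metricLength_comp_one_sub (ρ : ℂ → ℝ≥0∞) (γ : ℝ → ℂ) :
    metricLength ρ (fun t => γ (1 - t)) = metricLength ρ γ := by
  rw [metricLength, metricLength, ← setLIntegral_Ioo_zero_one_comp_sub_left]
  simp only [deriv_comp_const_sub, nnnorm_neg, sub_sub_cancel]

theorem IsCurve.comp_one_sub {γ : ℝ → ℂ} (hγ : IsCurve γ) : IsCurve fun t => γ (1 - t) := by
  have hmaps_Icc : MapsTo (fun t : ℝ => 1 - t) (Icc 0 1) (Icc 0 1) := fun t ht => by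
    constructor <;> linarith [ht.1, ht.2]
  have hmaps_Ioo : MapsTo (fun t : ℝ => 1 - t) (Ioo 0 1) (Ioo 0 1) := fun t ht => by
    constructor <;> linarith [ht.1, ht.2]
  exact ⟨hγ.1.comp (by fun_prop) hmaps_Icc, hγ.2.comp (by fun_prop) hmaps_Ioo⟩

theorem widthIn_comm (S X Y : Set ℂ) : widthIn S X Y = widthIn S Y X := by
  suffices h : ∀ X Y, widthIn S X Y ≤ widthIn S Y X from (h X Y).antisymm (h Y X)
  refine fun X Y => le_extremalWidth fun ρ hρ hadm => extremalWidth_le hρ ?_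
  rintro γ ⟨hγ, hS, hX, hY⟩
  rw [← metricLength_comp_one_sub]
  refine hadm _ ⟨hγ.comp_one_sub, fun t ht => hS _ ?_, by simpa using hY, by simpa using hX⟩
  constructor <;> linarith [ht.1, ht.2]

end ExtremalWidth

section RadialMetric

theorem abs_deriv_norm_le {E : Type*} [NormedAddCommGroup E] [InnerProductSpace ℝ E] {g : ℝ → E}
    {t : ℝ} (hg : DifferentiableAt ℝ g t) (hne : g t ≠ 0) :
    |deriv (fun u => ‖g u‖) t| ≤ ‖deriv g t‖ := by
  have hnorm : DifferentiableAt ℝ (fun x : E => ‖x‖) (g t) :=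
    (contDiffAt_norm ℝ hne).differentiableAt one_ne_zero
  have hlip : ‖fderiv ℝ (fun x : E => ‖x‖) (g t)‖ ≤ 1 :=
    mod_cast norm_fderiv_le_of_lipschitz ℝ (lipschitzWith_one_norm (E := E))
  calc |deriv ((fun x : E => ‖x‖) ∘ g) t|
      = ‖fderiv ℝ (fun x : E => ‖x‖) (g t) (deriv g t)‖ := by
        rw [(hnorm.hasFDerivAt.comp_hasDerivAt t hg.hasDerivAt).deriv, Real.norm_eq_abs]
    _ ≤ 1 * ‖deriv g t‖ := ContinuousLinearMap.le_of_opNorm_le _ hlip _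
    _ = ‖deriv g t‖ := one_mul _

/- The image of the part of the curve inside the annulus covers `(G r, G R)`, so the area formula
in dimension one bounds the length of that interval. -/
theorem ofReal_sub_le_metricLength {γ : ℝ → ℂ} (hγ : IsCurve γ) {p : ℂ} {r R : ℝ} (hr : 0 ≤ r)
    (hrR : r ≤ R) (h0 : ‖γ 0 - p‖ ≤ r) (h1 : R ≤ ‖γ 1 - p‖) {G k : ℝ → ℝ}
    (hG : ContinuousOn G (Icc r R)) (hG' : ∀ u ∈ Ioo r R, HasDerivAt G (k u) u)
    {ρ : ℂ → ℝ≥0∞} (hρ : ∀ z, ‖z - p‖ ∈ Ioo r R → ENNReal.ofReal |k ‖z - p‖| ≤ ρ z) :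
    ENNReal.ofReal (G R - G r) ≤ metricLength ρ γ := by
  set f : ℝ → ℝ := fun t => ‖γ t - p‖
  have hfc : ContinuousOn f (Icc 0 1) := (hγ.1.sub continuousOn_const).norm
  set s : Set ℝ := Ioo 0 1 ∩ f ⁻¹' Ioo r R
  have hs : MeasurableSet s :=
    ((hfc.mono Ioo_subset_Icc_self).isOpen_inter_preimage isOpen_Ioo isOpen_Ioo).measurableSet
  have hcover : Ioo (G r) (G R) ⊆ (G ∘ f) '' s := by
    intro y hy
    obtain ⟨u, hu, rfl⟩ := intermediate_value_Icc hrR hG (Ioo_subset_Icc_self hy)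
    have hu' : u ∈ Ioo r R :=
      ⟨hu.1.lt_of_ne (by rintro rfl; exact hy.1.false),
        hu.2.lt_of_ne (by rintro rfl; exact hy.2.false)⟩
    obtain ⟨t, ht, rfl⟩ := intermediate_value_Icc zero_le_one hfc
      ⟨h0.trans hu.1, hu.2.trans h1⟩
    refine ⟨t, ⟨⟨ht.1.lt_of_ne ?_, ht.2.lt_of_ne ?_⟩, hu'⟩, rfl⟩
    · rintro rfl; exact hu'.1.not_ge h0
    · rintro rfl; exact hu'.2.not_ge h1
  have hderiv : ∀ t ∈ s, HasDerivAt f (deriv f t) t ∧ |deriv f t| ≤ ‖deriv γ t‖ := by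
    intro t ht
    have hγ' : DifferentiableAt ℝ γ t :=
      (hγ.2.differentiableOn one_ne_zero).differentiableAt (isOpen_Ioo.mem_nhds ht.1)
    have hne : γ t - p ≠ 0 := norm_pos_iff.1 (hr.trans_lt ht.2.1)
    refine ⟨((hγ'.sub_const p).norm ℝ hne).hasDerivAt, ?_⟩
    simpa only [deriv_sub_const] using abs_deriv_norm_le (hγ'.sub_const p) hne
  calc ENNReal.ofReal (G R - G r)
      = volume (Ioo (G r) (G R)) := Real.volume_Ioo.symm
    _ ≤ volume ((G ∘ f) '' s) := measure_mono hcover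
    _ ≤ ∫⁻ t in s, ENNReal.ofReal |k (f t) * deriv f t| := by
        simpa only [ContinuousLinearMap.det_toSpanSingleton] using
          addHaar_image_le_lintegral_abs_det_fderiv volume hs fun t ht =>
            ((hG' _ ht.2).comp t (hderiv t ht).1).hasFDerivAt.hasFDerivWithinAt
    _ ≤ ∫⁻ t in s, ρ (γ t) * (‖deriv γ t‖₊ : ℝ≥0∞) := by
        refine setLIntegral_mono' hs fun t ht => ?_
        rw [abs_mul, ENNReal.ofReal_mul (abs_nonneg _), ← enorm_eq_nnnorm, ← ofReal_norm]
        exact mul_le_mul' (hρ _ ht.2) (ENNReal.ofReal_le_ofReal (hderiv t ht).2)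
    _ ≤ metricLength ρ γ := lintegral_mono_set inter_subset_left

theorem lintegral_norm_sub (p : ℂ) {F : ℝ → ℝ≥0∞} (hF : Measurable F) :
    ∫⁻ z : ℂ, F ‖z - p‖ =
      ENNReal.ofReal (2 * Real.pi) * ∫⁻ u in Ioi (0 : ℝ), ENNReal.ofReal u * F u := by
  rw [lintegral_sub_right_eq_self (fun z : ℂ => F ‖z‖) p, ← Complex.lintegral_comp_polarCoord_symm,
    polarCoord_target]
  calc ∫⁻ q in Ioi (0 : ℝ) ×ˢ Ioo (-Real.pi) Real.pi,
        ENNReal.ofReal q.1 • F ‖Complex.polarCoord.symm q‖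
      = ∫⁻ q in Ioi (0 : ℝ) ×ˢ Ioo (-Real.pi) Real.pi, ENNReal.ofReal q.1 * F q.1 * 1 := by
        refine setLIntegral_congr_fun (measurableSet_Ioi.prod measurableSet_Ioo) fun q hq => ?_
        simp only [Complex.norm_polarCoord_symm, abs_of_pos (show 0 < q.1 from hq.1), smul_eq_mul,
          mul_one]
    _ = (∫⁻ u in Ioi (0 : ℝ), ENNReal.ofReal u * F u) * ∫⁻ _ in Ioo (-Real.pi) Real.pi, 1 := by
        rw [Measure.volume_eq_prod, ← Measure.prod_restrict]
        exact lintegral_prod_mul (f := fun u : ℝ => ENNReal.ofReal u * F u) (g := fun _ : ℝ => 1)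
          (by fun_prop) (by fun_prop)
    _ = _ := by
        rw [setLIntegral_one, Real.volume_Ioo, mul_comm]
        ring_nf

theorem setLIntegral_Icc_inv_add {x y c : ℝ} (hxy : x ≤ y) (hc : 0 < x + c) :
    ∫⁻ u in Icc x y, ENNReal.ofReal (u + c)⁻¹ =
      ENNReal.ofReal (Real.log ((y + c) / (x + c))) := by
  have hcont : ContinuousOn (fun u : ℝ => (u + c)⁻¹) (Icc x y) :=
    ContinuousOn.inv₀ (by fun_prop) fun u hu => by linarith [hu.1]
  have hpos : ∀ᵐ u ∂volume.restrict (Icc x y), 0 ≤ (u + c)⁻¹ :=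
    (ae_restrict_mem measurableSet_Icc).mono fun u hu => inv_nonneg.2 (by linarith [hu.1])
  rw [← ofReal_integral_eq_lintegral_ofReal hcont.integrableOn_Icc hpos,
    integral_Icc_eq_integral_Ioc, ← intervalIntegral.integral_of_le hxy,
    intervalIntegral.integral_comp_add_right (fun u : ℝ => u⁻¹) c,
    integral_inv_of_pos hc (by linarith)]

/-- The metric `|k(‖z - p‖)| |dz|` on the closed annulus `r ≤ ‖z - p‖ ≤ R`, extended by zero. -/
def radialMetric (p : ℂ) (r R : ℝ) (k : ℝ → ℝ) (z : ℂ) : ℝ≥0∞ :=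
  (Icc r R).indicator (fun u => ENNReal.ofReal |k u|) ‖z - p‖

theorem measurable_indicator_ofReal_abs {k : ℝ → ℝ} (hk : Measurable k) (r R : ℝ) :
    Measurable ((Icc r R).indicator fun u => ENNReal.ofReal |k u|) :=
  hk.abs.ennreal_ofReal.indicator measurableSet_Icc

theorem measurable_radialMetric {k : ℝ → ℝ} (hk : Measurable k) (p : ℂ) (r R : ℝ) :
    Measurable (radialMetric p r R k) :=
  (measurable_indicator_ofReal_abs hk r R).comp (by fun_prop)

theorem lintegral_radialMetric_sq_le {k : ℝ → ℝ} (hk : Measurable k) (p : ℂ) {r R c δ : ℝ}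
    (hrR : r ≤ R) (hδ : 0 < r + δ) (hc : 0 ≤ c)
    (hkc : ∀ u ∈ Icc r R, u * k u ^ 2 ≤ c * (u + δ)⁻¹) :
    ∫⁻ z, radialMetric p r R k z ^ 2 ≤
      ENNReal.ofReal (2 * Real.pi * (c * Real.log ((R + δ) / (r + δ)))) := by
  set F : ℝ → ℝ≥0∞ := (Icc r R).indicator fun u => ENNReal.ofReal |k u|
  have hF : Measurable F := measurable_indicator_ofReal_abs hk r R
  have hFk : ∀ u, ENNReal.ofReal u * F u ^ 2 ≤
      (Icc r R).indicator (fun u => ENNReal.ofReal c * ENNReal.ofReal (u + δ)⁻¹) u := by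
    intro u
    by_cases hu : u ∈ Icc r R
    · simp only [F, indicator_of_mem hu]
      rw [← ENNReal.ofReal_pow (abs_nonneg _), sq_abs, ← ENNReal.ofReal_mul' (sq_nonneg _),
        ← ENNReal.ofReal_mul hc]
      exact ENNReal.ofReal_le_ofReal (hkc u hu)
    · simp [F, hu]
  calc ∫⁻ z, radialMetric p r R k z ^ 2
      = ENNReal.ofReal (2 * Real.pi) * ∫⁻ u in Ioi (0 : ℝ), ENNReal.ofReal u * F u ^ 2 :=
        lintegral_norm_sub p (hF.pow_const 2)
    _ ≤ ENNReal.ofReal (2 * Real.pi) *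
          ∫⁻ u, (Icc r R).indicator (fun u => ENNReal.ofReal c * ENNReal.ofReal (u + δ)⁻¹) u :=
        mul_le_mul_right ((setLIntegral_le_lintegral _ _).trans (lintegral_mono hFk)) _
    _ = _ := by
        rw [lintegral_indicator measurableSet_Icc, lintegral_const_mul' _ _ ENNReal.ofReal_ne_top,
          setLIntegral_Icc_inv_add hrR hδ, ← ENNReal.ofReal_mul hc,
          ← ENNReal.ofReal_mul (by positivity)]

theorem widthIn_le_of_annulus {S X Y : Set ℂ} {p : ℂ} {r R : ℝ} (hr : 0 < r) (hrR : r < R)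
    (hX : ∀ x ∈ X, ‖x - p‖ ≤ r) (hY : ∀ y ∈ Y, R ≤ ‖y - p‖) :
    widthIn S X Y ≤ ENNReal.ofReal (2 * Real.pi / Real.log (R / r)) := by
  set l := Real.log (R / r) with hl
  have hl0 : 0 < l := Real.log_pos ((one_lt_div hr).2 hrR)
  have hk : Measurable fun u : ℝ => u⁻¹ / l := by fun_prop
  calc widthIn S X Y
      ≤ ∫⁻ z, radialMetric p r R (fun u => u⁻¹ / l) z ^ 2 := by
        refine extremalWidth_le (measurable_radialMetric hk p r R) ?_
        rintro γ ⟨hγ, -, h0, h1⟩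
        calc 1 = ENNReal.ofReal (Real.log R / l - Real.log r / l) := by
              rw [← sub_div, ← Real.log_div (hr.trans hrR).ne' hr.ne', ← hl, div_self hl0.ne',
                ENNReal.ofReal_one]
          _ ≤ _ := by
              refine ofReal_sub_le_metricLength hγ hr.le hrR.le (hX _ h0) (hY _ h1)
                (G := fun u => Real.log u / l)
                (k := fun u => u⁻¹ / l) ?_ ?_ fun z hz => ?_
              · exact (Real.continuousOn_log.mono fun u hu => (hr.trans_le hu.1).ne').div_const l
              · exact fun u hu => (Real.hasDerivAt_log (hr.trans hu.1).ne').div_const l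
              · rw [radialMetric, indicator_of_mem (Ioo_subset_Icc_self hz)]
    _ ≤ ENNReal.ofReal (2 * Real.pi * ((l ^ 2)⁻¹ * Real.log ((R + 0) / (r + 0)))) := by
        refine lintegral_radialMetric_sq_le hk p hrR.le (by simpa) (by positivity) fun u hu => ?_
        have hu0 : 0 < u := hr.trans_le hu.1
        exact le_of_eq (by field_simp; ring)
    _ = ENNReal.ofReal (2 * Real.pi / l) := by
        rw [add_zero, add_zero, ← hl]
        field_simp

/- A curve from `x` to `Y` leaves the disc of radius `(‖x - p‖ + d) / 2` around `x`, on which the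
metric `3 / (‖z - p‖ + d)` is at least `2 / (‖x - p‖ + d)`. -/
theorem widthIn_le_of_norm_sub_add_le {S X Y : Set ℂ} {p : ℂ} {M d : ℝ} (hM : 0 ≤ M) (hd : 0 < d)
    (hX : ∀ x ∈ X, ‖x - p‖ ≤ M) (hXY : ∀ x ∈ X, ∀ y ∈ Y, ‖x - p‖ + d ≤ 2 * ‖y - x‖) :
    widthIn S X Y ≤ ENNReal.ofReal (18 * Real.pi * Real.log (2 * (M / d + 1))) := by
  have hk : Measurable fun u : ℝ => 3 / (u + d) := by fun_prop
  calc widthIn S X Y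
      ≤ ∫⁻ z, radialMetric p 0 (2 * M + d) (fun u => 3 / (u + d)) z ^ 2 := by
        refine extremalWidth_le (measurable_radialMetric hk _ _ _) ?_
        rintro γ ⟨hγ, -, h0, h1⟩
        set x := γ 0
        have hxM := hX x h0
        have hxd : 0 < ‖x - p‖ + d := by positivity
        calc 1 = ENNReal.ofReal (2 / (‖x - p‖ + d) * ((‖x - p‖ + d) / 2) -
                2 / (‖x - p‖ + d) * 0) := by
              rw [mul_zero, sub_zero, div_mul_div_cancel₀ hxd.ne', div_self two_ne_zero,
                ENNReal.ofReal_one]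
          _ ≤ _ := by
              refine ofReal_sub_le_metricLength hγ (p := x) le_rfl (by positivity) (by simp [x])
                (by linarith [hXY x h0 _ h1]) (G := fun u => 2 / (‖x - p‖ + d) * u) (by fun_prop)
                (fun u _ => hasDerivAt_const_mul _) fun z hz => ?_
              have hzp : ‖z - p‖ ≤ ‖z - x‖ + ‖x - p‖ := norm_sub_le_norm_sub_add_norm_sub z x p
              have hz2 := hz.2
              have hmem : ‖z - p‖ ∈ Icc 0 (2 * M + d) := ⟨norm_nonneg _, by linarith⟩
              rw [radialMetric, indicator_of_mem hmem]
              refine ENNReal.ofReal_le_ofReal ?_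
              rw [abs_of_pos (by positivity), abs_of_pos (by positivity),
                div_le_div_iff₀ hxd (by positivity)]
              linarith
    _ ≤ ENNReal.ofReal (2 * Real.pi * (9 * Real.log ((2 * M + d + d) / (0 + d)))) := by
        refine lintegral_radialMetric_sq_le hk p (by positivity) (by simpa) (by norm_num) ?_
        intro u hu
        have hud : 0 < u + d := by linarith [hu.1]
        calc u * (3 / (u + d)) ^ 2 ≤ (u + d) * (3 / (u + d)) ^ 2 := by gcongr; linarith
          _ = 9 * (u + d)⁻¹ := by field_simp; norm_num
    _ = ENNReal.ofReal (18 * Real.pi * Real.log (2 * (M / d + 1))) := by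
        have : (2 * M + d + d) / (0 + d) = 2 * (M / d + 1) := by field_simp; ring
        rw [this]
        ring_nf

end RadialMetric

section ConformalImage

theorem det_restrictScalars_toSpanSingleton (w : ℂ) :
    ((ContinuousLinearMap.toSpanSingleton ℂ w).restrictScalars ℝ).det = ‖w‖ ^ 2 := by
  simp [ContinuousLinearMap.det, LinearMap.det_restrictScalars, Algebra.norm_complex_eq,
    Complex.normSq_eq_norm_sq]

theorem lintegral_image_eq_lintegral_enorm_deriv_sq_mul {f : ℂ → ℂ} {U S : Set ℂ} (hU : IsOpen U)
    (hf : DifferentiableOn ℂ f U) (hS : MeasurableSet S) (hSU : S ⊆ U) (hinj : InjOn f S)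
    (g : ℂ → ℝ≥0∞) :
    ∫⁻ w in f '' S, g w = ∫⁻ z in S, ‖deriv f z‖ₑ ^ 2 * g (f z) := by
  rw [lintegral_image_eq_lintegral_abs_det_fderiv_mul volume hS (fun z hz =>
    ((hf.differentiableAt (hU.mem_nhds (hSU hz))).hasDerivAt.hasFDerivAt.restrictScalars
      ℝ).hasFDerivWithinAt) hinj]
  refine lintegral_congr fun z => ?_
  rw [det_restrictScalars_toSpanSingleton, abs_of_nonneg (by positivity),
    ENNReal.ofReal_pow (norm_nonneg _), ofReal_norm]

theorem IsCurve.comp_differentiableOn {γ : ℝ → ℂ} (hγ : IsCurve γ) {f : ℂ → ℂ} {U : Set ℂ}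
    (hU : IsOpen U) (hf : DifferentiableOn ℂ f U) (hγU : MapsTo γ (Icc 0 1) U) :
    IsCurve (f ∘ γ) :=
  ⟨hf.continuousOn.comp hγ.1 hγU,
    ((hf.contDiffOn hU).restrict_scalars ℝ).comp hγ.2 (hγU.mono_left Ioo_subset_Icc_self)⟩

theorem metricLength_comp {γ : ℝ → ℂ} (hγ : IsCurve γ) {f : ℂ → ℂ} {U : Set ℂ}
    (hU : IsOpen U) (hf : DifferentiableOn ℂ f U) (hγU : MapsTo γ (Icc 0 1) U)
    (ρ : ℂ → ℝ≥0∞) :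
    metricLength ρ (f ∘ γ) = metricLength (fun z => ‖deriv f z‖ₑ * ρ (f z)) γ := by
  refine setLIntegral_congr_fun measurableSet_Ioo fun t ht => ?_
  have hγt : DifferentiableAt ℝ γ t :=
    (hγ.2.differentiableOn one_ne_zero).differentiableAt (isOpen_Ioo.mem_nhds ht)
  have hft : DifferentiableAt ℂ f (γ t) :=
    hf.differentiableAt (hU.mem_nhds (hγU (Ioo_subset_Icc_self ht)))
  simp only [← enorm_eq_nnnorm, Function.comp_apply,
    (hft.hasDerivAt.comp_of_eq t hγt.hasDerivAt rfl).deriv, enorm_mul]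
  ring

theorem metricLength_congr {ρ σ : ℂ → ℝ≥0∞} {γ : ℝ → ℂ}
    (h : ∀ t ∈ Ioo (0 : ℝ) 1, ρ (γ t) = σ (γ t)) : metricLength ρ γ = metricLength σ γ :=
  setLIntegral_congr_fun measurableSet_Ioo fun t ht => by simp only [h t ht]

/- Conformal invariance of the area integral: an admissible metric on the image pulls back. -/
theorem widthIn_le_widthIn_image {f : ℂ → ℂ} {U S : Set ℂ} (hU : IsOpen U)
    (hf : DifferentiableOn ℂ f U) (hS : MeasurableSet S) (hSU : S ⊆ U) (hinj : InjOn f S)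
    (X Y : Set ℂ) : widthIn S X Y ≤ widthIn (f '' S) (f '' X) (f '' Y) := by
  refine le_extremalWidth fun ρ hρ hadm => ?_
  set σ : ℂ → ℝ≥0∞ := S.indicator fun z => ‖deriv f z‖ₑ * ρ (f z) with hσ
  have hfS : Measurable (S.indicator f) := by
    classical
    rw [← piecewise_eq_indicator]
    exact (hf.continuousOn.mono hSU).measurable_piecewise continuousOn_const hS
  have hσm : Measurable σ := by
    have hσf : σ = S.indicator fun z => ‖deriv f z‖ₑ * ρ (S.indicator f z) :=
      indicator_congr fun z hz => by rw [indicator_of_mem hz]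
    rw [hσf]
    exact ((measurable_deriv f).enorm.mul (hρ.comp hfS)).indicator hS
  calc widthIn S X Y ≤ ∫⁻ z, σ z ^ 2 := by
        refine extremalWidth_le hσm ?_
        rintro γ ⟨hγ, hγS, hX, hY⟩
        have hγU : MapsTo γ (Icc 0 1) U := fun t ht => hSU (hγS t ht)
        calc 1 ≤ metricLength ρ (f ∘ γ) :=
              hadm _ ⟨hγ.comp_differentiableOn hU hf hγU, fun t ht => mem_image_of_mem f (hγS t ht),
                mem_image_of_mem f hX, mem_image_of_mem f hY⟩
          _ = metricLength (fun z => ‖deriv f z‖ₑ * ρ (f z)) γ := metricLength_comp hγ hU hf hγU ρ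
          _ = metricLength σ γ := metricLength_congr fun t ht => by
              rw [hσ, indicator_of_mem (hγS t (Ioo_subset_Icc_self ht))]
    _ = ∫⁻ z in S, ‖deriv f z‖ₑ ^ 2 * ρ (f z) ^ 2 := by
        rw [← lintegral_indicator hS]
        refine lintegral_congr fun z => ?_
        by_cases hz : z ∈ S <;> simp [hσ, hz, mul_pow]
    _ = ∫⁻ w in f '' S, ρ w ^ 2 :=
        (lintegral_image_eq_lintegral_enorm_deriv_sq_mul hU hf hS hSU hinj (ρ · ^ 2)).symm
    _ ≤ ∫⁻ w, ρ w ^ 2 := setLIntegral_le_lintegral _ _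

end ConformalImage

section Foliation

theorem det_eq_re_mul_im_sub (A : ℂ →L[ℝ] ℂ) :
    A.det = (A 1).re * (A Complex.I).im - (A Complex.I).re * (A 1).im := by
  rw [ContinuousLinearMap.det, ← LinearMap.det_toMatrix Complex.basisOneI, Matrix.det_fin_two]
  simp [LinearMap.toMatrix_apply]

theorem setLIntegral_reProdIm {s t : Set ℝ} {f : ℂ → ℝ≥0∞}
    (hf : AEMeasurable f (volume.restrict (s ×ℂ t))) :
    ∫⁻ z in s ×ℂ t, f z = ∫⁻ x in s, ∫⁻ y in t, f ⟨x, y⟩ := by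
  have hmp := Complex.volume_preserving_equiv_real_prod.symm Complex.measurableEquivRealProd
  have hemb := Complex.measurableEquivRealProd.symm.measurableEmbedding
  have hpre : Complex.measurableEquivRealProd.symm ⁻¹' (s ×ℂ t) = s ×ˢ t := rfl
  have hrestrict := hmp.restrict_preimage_emb hemb (s ×ℂ t)
  rw [← hmp.setLIntegral_comp_preimage_emb hemb, hpre, Measure.volume_eq_prod,
    ← Measure.prod_restrict, lintegral_prod]
  · rfl
  · rw [Measure.prod_restrict, ← Measure.volume_eq_prod, ← hpre]
    exact hf.comp_quasiMeasurePreserving hrestrict.quasiMeasurePreserving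

theorem contDiff_complexMk {E : Type*} [NormedAddCommGroup E] [NormedSpace ℝ E] {x y : E → ℝ}
    {n : WithTop ℕ∞} (hx : ContDiff ℝ n x) (hy : ContDiff ℝ n y) :
    ContDiff ℝ n fun e => (⟨x e, y e⟩ : ℂ) :=
  Complex.equivRealProdCLM.symm.contDiff.comp (hx.prodMk hy)

theorem hasDerivAt_complexMk {x y : ℝ → ℝ} {x' y' t : ℝ} (hx : HasDerivAt x x' t)
    (hy : HasDerivAt y y' t) : HasDerivAt (fun s => (⟨x s, y s⟩ : ℂ)) ⟨x', y'⟩ t :=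
  Complex.equivRealProdCLM.symm.hasFDerivAt.comp_hasDerivAt t (hx.prodMk hy)

theorem hasDerivAt_comp_complexMk_left {Φ : ℂ → ℂ} {A : ℂ →L[ℝ] ℂ} {u t : ℝ}
    (hΦ : HasFDerivAt Φ A ⟨u, t⟩) : HasDerivAt (fun v : ℝ => Φ ⟨v, t⟩) (A 1) u :=
  hΦ.comp_hasDerivAt u (hasDerivAt_complexMk (hasDerivAt_id u) (hasDerivAt_const u t))

theorem hasDerivAt_comp_complexMk_right {Φ : ℂ → ℂ} {A : ℂ →L[ℝ] ℂ} {u t : ℝ}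
    (hΦ : HasFDerivAt Φ A ⟨u, t⟩) : HasDerivAt (fun v : ℝ => Φ ⟨u, v⟩) (A Complex.I) t :=
  hΦ.comp_hasDerivAt t (hasDerivAt_complexMk (hasDerivAt_const t u) (hasDerivAt_id t))

theorem sq_lintegral_mul_le {α : Type*} [MeasurableSpace α] {μ : Measure α} {f g : α → ℝ≥0∞}
    (hf : AEMeasurable f μ) (hg : AEMeasurable g μ) :
    (∫⁻ a, f a * g a ∂μ) ^ 2 ≤ (∫⁻ a, f a ^ 2 ∂μ) * ∫⁻ a, g a ^ 2 ∂μ := by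
  have holder := ENNReal.lintegral_mul_le_Lp_mul_Lq μ Real.HolderConjugate.two_two hf hg
  simp only [ENNReal.rpow_two, Pi.mul_apply] at holder
  calc (∫⁻ a, f a * g a ∂μ) ^ 2
      ≤ ((∫⁻ a, f a ^ 2 ∂μ) ^ (1 / 2 : ℝ) * (∫⁻ a, g a ^ 2 ∂μ) ^ (1 / 2 : ℝ)) ^ 2 := by gcongr
    _ = _ := by
      simp only [mul_pow, ← ENNReal.rpow_natCast, ← ENNReal.rpow_mul]
      norm_num

theorem sq_lintegral_mul_ofReal_le {α : Type*} [MeasurableSpace α] {μ : Measure α} {h : α → ℝ≥0∞}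
    {v J : α → ℝ} (hh : AEMeasurable h μ) (hv : AEMeasurable v μ) (hJ : AEMeasurable J μ)
    (hv0 : ∀ a, 0 ≤ v a) (hJ0 : ∀ᵐ a ∂μ, 0 < J a) :
    (∫⁻ a, h a * ENNReal.ofReal (v a) ∂μ) ^ 2 ≤
      (∫⁻ a, ENNReal.ofReal (v a ^ 2 / J a) ∂μ) * ∫⁻ a, ENNReal.ofReal (J a) * h a ^ 2 ∂μ := by
  set f : α → ℝ≥0∞ := fun a => ENNReal.ofReal (v a / √(J a))
  set g : α → ℝ≥0∞ := fun a => ENNReal.ofReal (√(J a)) * h a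
  have hfg : ∫⁻ a, h a * ENNReal.ofReal (v a) ∂μ = ∫⁻ a, f a * g a ∂μ := by
    refine lintegral_congr_ae (hJ0.mono fun a ha => ?_)
    have hsqrt : 0 < √(J a) := Real.sqrt_pos.2 ha
    simp only [f, g]
    rw [← mul_assoc, ← ENNReal.ofReal_mul' hsqrt.le, div_mul_cancel₀ _ hsqrt.ne', mul_comm]
  have hf2 : ∫⁻ a, ENNReal.ofReal (v a ^ 2 / J a) ∂μ = ∫⁻ a, f a ^ 2 ∂μ := by
    refine lintegral_congr_ae (hJ0.mono fun a ha => ?_)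
    simp only [f, ← ENNReal.ofReal_pow (div_nonneg (hv0 a) (Real.sqrt_nonneg _)), div_pow,
      Real.sq_sqrt ha.le]
  have hg2 : ∫⁻ a, ENNReal.ofReal (J a) * h a ^ 2 ∂μ = ∫⁻ a, g a ^ 2 ∂μ := by
    refine lintegral_congr_ae (hJ0.mono fun a ha => ?_)
    simp only [g, mul_pow, ← ENNReal.ofReal_pow (Real.sqrt_nonneg _), Real.sq_sqrt ha.le]
  rw [hfg, hf2, hg2]
  exact sq_lintegral_mul_le (hv.div hJ.sqrt).ennreal_ofReal (hJ.sqrt.ennreal_ofReal.mul hh)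

theorem inv_le_setLIntegral_sq_mul {ρ : ℂ → ℝ≥0∞} (hρ : Measurable ρ) {γ : ℝ → ℂ}
    (hγ : ContDiffOn ℝ 1 γ (Ioo 0 1)) {J : ℝ → ℝ} (hJ : ContinuousOn J (Ioo 0 1))
    (hJ0 : ∀ t ∈ Ioo (0 : ℝ) 1, 0 < J t) (hlen : 1 ≤ metricLength ρ γ) :
    (∫⁻ t in Ioo (0 : ℝ) 1, ENNReal.ofReal (‖deriv γ t‖ ^ 2 / J t))⁻¹ ≤
      ∫⁻ t in Ioo (0 : ℝ) 1, ENNReal.ofReal (J t) * ρ (γ t) ^ 2 := by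
  set K := ∫⁻ t in Ioo (0 : ℝ) 1, ENNReal.ofReal (‖deriv γ t‖ ^ 2 / J t)
  set E := ∫⁻ t in Ioo (0 : ℝ) 1, ENNReal.ofReal (J t) * ρ (γ t) ^ 2
  have hspeed : AEMeasurable (fun t => ‖deriv γ t‖) (volume.restrict (Ioo 0 1)) :=
    ((hγ.continuousOn_deriv_of_isOpen isOpen_Ioo le_rfl).aemeasurable measurableSet_Ioo).norm
  have hKE : 1 ≤ K * E := by
    calc (1 : ℝ≥0∞) ≤ metricLength ρ γ ^ 2 := one_le_pow₀ hlen
      _ = (∫⁻ t in Ioo (0 : ℝ) 1, ρ (γ t) * ENNReal.ofReal ‖deriv γ t‖) ^ 2 := by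
        simp only [metricLength, ofReal_norm, enorm_eq_nnnorm]
      _ ≤ K * E :=
        sq_lintegral_mul_ofReal_le
          (hρ.comp_aemeasurable (hγ.continuousOn.aemeasurable measurableSet_Ioo)) hspeed
          (hJ.aemeasurable measurableSet_Ioo) (fun _ => norm_nonneg _)
          ((ae_restrict_mem measurableSet_Ioo).mono hJ0)
  refine (ENNReal.inv_le_iff_le_mul ?_ ?_).2 hKE
  · rintro - hK
    simp [hK] at hKE
  · rintro - hE
    simp [hE] at hKE

theorem lintegral_inv_le_extremalWidth {F : Set (ℝ → ℂ)} {T : Set ℝ} (hT : IsOpen T) {Φ : ℂ → ℂ}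
    (hΦ : ContDiffOn ℝ 1 Φ (T ×ℂ Ioo 0 1)) (hinj : InjOn Φ (T ×ℂ Ioo 0 1))
    (hdet : ∀ z ∈ T ×ℂ Ioo 0 1, (fderiv ℝ Φ z).det ≠ 0)
    (hF : ∀ u ∈ T, (fun t : ℝ => Φ ⟨u, t⟩) ∈ F) :
    ∫⁻ u in T, (∫⁻ t in Ioo (0 : ℝ) 1, ENNReal.ofReal
      (‖fderiv ℝ Φ ⟨u, t⟩ Complex.I‖ ^ 2 / |(fderiv ℝ Φ ⟨u, t⟩).det|))⁻¹ ≤ extremalWidth F := by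
  refine le_extremalWidth fun ρ hρ hadm => ?_
  set D : Set ℂ := T ×ℂ Ioo 0 1
  set J : ℂ → ℝ := fun z => |(fderiv ℝ Φ z).det| with hJ
  have hD : IsOpen D := hT.reProdIm isOpen_Ioo
  have hJc : ContinuousOn J D :=
    (ContinuousLinearMap.continuous_det.comp_continuousOn
      (hΦ.continuousOn_fderiv_of_isOpen hD le_rfl)).abs
  have hΦd : ∀ z ∈ D, HasFDerivAt Φ (fderiv ℝ Φ z) z := fun z hz =>
    ((hΦ.differentiableOn one_ne_zero).differentiableAt (hD.mem_nhds hz)).hasFDerivAt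
  have hmeas : AEMeasurable (fun z => ENNReal.ofReal (J z) * ρ (Φ z) ^ 2) (volume.restrict D) :=
    (hJc.aemeasurable hD.measurableSet).ennreal_ofReal.mul
      ((hρ.comp_aemeasurable (hΦ.continuousOn.aemeasurable hD.measurableSet)).pow_const 2)
  calc ∫⁻ u in T, (∫⁻ t in Ioo (0 : ℝ) 1, ENNReal.ofReal
          (‖fderiv ℝ Φ ⟨u, t⟩ Complex.I‖ ^ 2 / J ⟨u, t⟩))⁻¹
      ≤ ∫⁻ u in T, ∫⁻ t in Ioo (0 : ℝ) 1, ENNReal.ofReal (J ⟨u, t⟩) * ρ (Φ ⟨u, t⟩) ^ 2 := by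
        refine setLIntegral_mono' hT.measurableSet fun u hu => ?_
        have hmaps : MapsTo (fun t : ℝ => (⟨u, t⟩ : ℂ)) (Ioo 0 1) D := fun t ht => ⟨hu, ht⟩
        have hline : ContDiff ℝ 1 fun t : ℝ => (⟨u, t⟩ : ℂ) :=
          contDiff_complexMk contDiff_const contDiff_id
        refine le_of_eq_of_le (congrArg _ (setLIntegral_congr_fun measurableSet_Ioo fun t ht => ?_))
          (inv_le_setLIntegral_sq_mul hρ (hΦ.comp hline.contDiffOn hmaps)
            (hJc.comp hline.continuous.continuousOn hmaps)
            (fun t ht => abs_pos.2 (hdet _ (hmaps ht))) (hadm _ (hF u hu)))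
        have hleaf := (hasDerivAt_comp_complexMk_right (hΦd _ (hmaps ht))).deriv
        simp only [Function.comp_def, hleaf, hJ]
    _ = ∫⁻ z in D, ENNReal.ofReal (J z) * ρ (Φ z) ^ 2 := (setLIntegral_reProdIm hmeas).symm
    _ = ∫⁻ w in Φ '' D, ρ w ^ 2 :=
        (lintegral_image_eq_lintegral_abs_det_fderiv_mul volume hD.measurableSet
          (fun z hz => (hΦd z hz).hasFDerivWithinAt) hinj (ρ · ^ 2)).symm
    _ ≤ ∫⁻ w, ρ w ^ 2 := setLIntegral_le_lintegral _ _

end Foliation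

section ParabolaFoliation

/-- A map whose vertical leaves `t ↦ parabolaMap c α R ⟨u, t⟩`, `0 ≤ t ≤ 1`, are arcs of parabolas
over `[c - u, c + u]`. The height of the leaf is an affine function of `u` with slope proportional
to `R` and is comparable to `u` for `α ≤ u ≤ α + A` as long as `(R - 1) * A ≤ α`. -/
def parabolaMap (c α R : ℝ) (z : ℂ) : ℂ :=
  ⟨c + z.re * (2 * z.im - 1), (z.re + (R - 1) * (z.re - α)) * (z.im * (1 - z.im))⟩

theorem contDiff_parabolaMap (c α R : ℝ) : ContDiff ℝ 1 (parabolaMap c α R) := by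
  have hre : ContDiff ℝ 1 Complex.re := Complex.reCLM.contDiff
  have him : ContDiff ℝ 1 Complex.im := Complex.imCLM.contDiff
  exact contDiff_complexMk (by fun_prop) (by fun_prop)

theorem fderiv_parabolaMap_one (c α R : ℝ) (z : ℂ) :
    fderiv ℝ (parabolaMap c α R) z 1 = ⟨2 * z.im - 1, R * (z.im * (1 - z.im))⟩ := by
  have hΦ := ((contDiff_parabolaMap c α R).differentiable one_ne_zero z).hasFDerivAt
  refine (hasDerivAt_comp_complexMk_left hΦ).unique (hasDerivAt_complexMk ?_ ?_)
  · simpa using ((hasDerivAt_id z.re).mul_const (2 * z.im - 1)).const_add c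
  · have hheight : HasDerivAt (fun u => u + (R - 1) * (u - α)) (1 + (R - 1) * 1) z.re :=
      (hasDerivAt_id z.re).add (((hasDerivAt_id z.re).sub_const α).const_mul (R - 1))
    simpa using hheight.mul_const (z.im * (1 - z.im))

theorem fderiv_parabolaMap_I (c α R : ℝ) (z : ℂ) :
    fderiv ℝ (parabolaMap c α R) z Complex.I =
      ⟨2 * z.re, (z.re + (R - 1) * (z.re - α)) * (1 - 2 * z.im)⟩ := by
  have hΦ := ((contDiff_parabolaMap c α R).differentiable one_ne_zero z).hasFDerivAt
  refine (hasDerivAt_comp_complexMk_right hΦ).unique (hasDerivAt_complexMk ?_ ?_)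
  · simpa [mul_comm] using
      ((((hasDerivAt_id z.im).const_mul 2).sub_const 1).const_mul z.re).const_add c
  · refine (((hasDerivAt_id z.im).fun_mul ((hasDerivAt_id z.im).const_sub 1)).const_mul
      (z.re + (R - 1) * (z.re - α))).congr_deriv ?_
    simp only [id]
    ring

theorem abs_det_fderiv_parabolaMap {c α R : ℝ} {z : ℂ} (hα : 0 < α) (hR : 1 ≤ R) (hz : α < z.re)
    (ht : z.im ∈ Ioo 0 1) :
    |(fderiv ℝ (parabolaMap c α R) z).det| = 2 * R * z.re * (z.im * (1 - z.im)) +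
      (z.re + (R - 1) * (z.re - α)) * (1 - 2 * z.im) ^ 2 := by
  have : 0 ≤ (R - 1) * (z.re - α) := mul_nonneg (by linarith) (by linarith)
  have hw : 0 < z.im * (1 - z.im) := mul_pos ht.1 (by linarith [ht.2])
  have hu : 0 < z.re := hα.trans hz
  rw [det_eq_re_mul_im_sub, fderiv_parabolaMap_one, fderiv_parabolaMap_I, ← abs_neg, ← abs_of_nonneg
    (a := 2 * R * z.re * (z.im * (1 - z.im)) + _) (by positivity)]
  congr 1
  ring

theorem le_abs_det_fderiv_parabolaMap {c α R : ℝ} {z : ℂ} (hα : 0 < α) (hR : 1 ≤ R)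
    (hz : α < z.re) (ht : z.im ∈ Ioo 0 1) :
    z.re / 4 * (1 + R * (z.im * (1 - z.im))) ≤ |(fderiv ℝ (parabolaMap c α R) z).det| := by
  rw [abs_det_fderiv_parabolaMap hα hR hz ht]
  set w := z.im * (1 - z.im) with hw
  have hw0 : 0 < w := mul_pos ht.1 (by linarith [ht.2])
  have hsq : (1 - 2 * z.im) ^ 2 = 1 - 4 * w := by rw [hw]; ring
  have hw4 : 0 ≤ 1 - 4 * w := hsq ▸ sq_nonneg _
  have hRw : w ≤ R * w := le_mul_of_one_le_left hw0.le hR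
  have hu : 0 < z.re := hα.trans hz
  have hheight : z.re ≤ z.re + (R - 1) * (z.re - α) :=
    le_add_of_nonneg_right (mul_nonneg (by linarith) (by linarith))
  calc z.re / 4 * (1 + R * w) ≤ z.re * (2 * (R * w) + (1 - 4 * w)) := by
        rw [div_mul_eq_mul_div, mul_div_assoc]
        exact mul_le_mul_of_nonneg_left (by linarith) hu.le
    _ = 2 * R * z.re * w + z.re * (1 - 4 * w) := by ring
    _ ≤ _ := by rw [hsq]; gcongr

theorem inv_one_add_mul_mul_one_sub_le {R t : ℝ} (hR : 0 < R) (ht : t ∈ Ioo 0 1) :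
    (1 + R * (t * (1 - t)))⁻¹ ≤ R⁻¹ * ((t + R⁻¹)⁻¹ + (1 - t + R⁻¹)⁻¹) := by
  have h0 : 0 < t := ht.1
  have h1 : 0 < 1 - t := by linarith [ht.2]
  have hsum : R⁻¹ * ((t + R⁻¹)⁻¹ + (1 - t + R⁻¹)⁻¹) =
      (2 + R) / ((1 + R * t) * (1 + R * (1 - t))) := by
    field_simp
    ring
  rw [hsum, inv_eq_one_div, div_le_div_iff₀ (by positivity) (by positivity)]
  nlinarith [mul_pos hR (mul_pos h0 h1), mul_pos hR hR]

theorem normSq_fderiv_parabolaMap_I_div_le {c α A R : ℝ} {z : ℂ} (hα : 0 < α) (hR : 1 ≤ R)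
    (hRA : (R - 1) * A ≤ α) (hz : z.re ∈ Ioo α (α + A)) (ht : z.im ∈ Ioo 0 1) :
    ‖fderiv ℝ (parabolaMap c α R) z Complex.I‖ ^ 2 / |(fderiv ℝ (parabolaMap c α R) z).det| ≤
      32 * z.re * R⁻¹ * ((z.im + R⁻¹)⁻¹ + (1 - z.im + R⁻¹)⁻¹) := by
  have hu : 0 < z.re := hα.trans hz.1
  have hw : 0 < z.im * (1 - z.im) := mul_pos ht.1 (by linarith [ht.2])
  have hheight0 : 0 ≤ (R - 1) * (z.re - α) := mul_nonneg (by linarith) (by linarith [hz.1])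
  have hheight : (R - 1) * (z.re - α) ≤ z.re :=
    (mul_le_mul_of_nonneg_left (by linarith [hz.2]) (by linarith)).trans (hRA.trans hz.1.le)
  have hspeed : ‖fderiv ℝ (parabolaMap c α R) z Complex.I‖ ^ 2 ≤ 8 * z.re ^ 2 := by
    rw [fderiv_parabolaMap_I, ← Complex.normSq_eq_norm_sq, Complex.normSq_mk, ← sq, ← sq, mul_pow,
      mul_pow]
    have h1 : (z.re + (R - 1) * (z.re - α)) ^ 2 ≤ (2 * z.re) ^ 2 := by gcongr; linarith
    have h2 : (1 - 2 * z.im) ^ 2 ≤ 1 := by nlinarith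
    nlinarith [mul_le_mul h1 h2 (sq_nonneg _) (sq_nonneg _)]
  calc _ ≤ 8 * z.re ^ 2 / (z.re / 4 * (1 + R * (z.im * (1 - z.im)))) :=
        div_le_div₀ (by positivity) hspeed (by positivity)
          (le_abs_det_fderiv_parabolaMap hα hR hz.1 ht)
    _ = 32 * z.re * (1 + R * (z.im * (1 - z.im)))⁻¹ := by field_simp; ring
    _ ≤ 32 * z.re * (R⁻¹ * ((z.im + R⁻¹)⁻¹ + (1 - z.im + R⁻¹)⁻¹)) := by
        gcongr
        exact inv_one_add_mul_mul_one_sub_le (by linarith) ht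
    _ = _ := by ring

theorem setLIntegral_normSq_fderiv_parabolaMap_I_div_le {c α A R u : ℝ} (hα : 0 < α) (hR : 1 ≤ R)
    (hRA : (R - 1) * A ≤ α) (hu : u ∈ Ioo α (α + A)) :
    ∫⁻ t in Ioo (0 : ℝ) 1, ENNReal.ofReal (‖fderiv ℝ (parabolaMap c α R) ⟨u, t⟩ Complex.I‖ ^ 2 /
        |(fderiv ℝ (parabolaMap c α R) ⟨u, t⟩).det|) ≤
      ENNReal.ofReal (64 * u * R⁻¹ * Real.log (1 + R)) := by
  have : 0 < R := by linarith
  have hu0 : 0 < u := hα.trans hu.1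
  set f : ℝ → ℝ≥0∞ := fun t => ENNReal.ofReal (t + R⁻¹)⁻¹
  have hf : Measurable f := by fun_prop
  have hint : ∫⁻ t in Ioo (0 : ℝ) 1, f t = ENNReal.ofReal (Real.log (1 + R)) := by
    rw [setLIntegral_congr Ioo_ae_eq_Icc, setLIntegral_Icc_inv_add zero_le_one (by positivity)]
    congr 2
    field_simp
    ring
  calc _ ≤ ∫⁻ t in Ioo (0 : ℝ) 1, ENNReal.ofReal (32 * u * R⁻¹) * (f t + f (1 - t)) := by
        refine setLIntegral_mono' measurableSet_Ioo fun t ht => ?_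
        have h0 : 0 < t := ht.1
        have h1 : 0 < 1 - t := by linarith [ht.2]
        rw [← ENNReal.ofReal_add (by positivity) (by positivity),
          ← ENNReal.ofReal_mul (by positivity)]
        exact ENNReal.ofReal_le_ofReal (normSq_fderiv_parabolaMap_I_div_le hα hR hRA hu ht)
    _ = ENNReal.ofReal (32 * u * R⁻¹) * (ENNReal.ofReal (Real.log (1 + R)) +
          ENNReal.ofReal (Real.log (1 + R))) := by
        rw [lintegral_const_mul' _ _ ENNReal.ofReal_ne_top, lintegral_add_left hf,
          setLIntegral_Ioo_zero_one_comp_sub_left, hint]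
    _ = _ := by
        have hlog : 0 ≤ Real.log (1 + R) := Real.log_nonneg (by linarith)
        rw [← ENNReal.ofReal_add hlog hlog, ← ENNReal.ofReal_mul (by positivity)]
        ring_nf

/- Along a leaf, the horizontal distance from `c` determines `t (1 - t)`; over the same point the
larger leaf is strictly higher. -/
theorem injOn_parabolaMap {c α R : ℝ} (hα : 0 < α) (hR : 1 ≤ R) :
    InjOn (parabolaMap c α R) (Ioi α ×ℂ Ioo 0 1) := by
  have hmono : ∀ z ∈ Ioi α ×ℂ Ioo 0 1, ∀ w,
      parabolaMap c α R z = parabolaMap c α R w → w.re ≤ z.re := by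
    intro z hz w hzw
    by_contra! hlt
    have hz0 : 0 < z.re := hα.trans hz.1
    have hx : z.re * (2 * z.im - 1) = w.re * (2 * w.im - 1) := by
      simpa only [parabolaMap, add_right_inj] using congrArg Complex.re hzw
    have hsq : (2 * w.im - 1) ^ 2 ≤ (2 * z.im - 1) ^ 2 := by
      have hxsq : z.re ^ 2 * (2 * z.im - 1) ^ 2 = w.re ^ 2 * (2 * w.im - 1) ^ 2 := by
        rw [← mul_pow, hx, mul_pow]
      refine le_of_mul_le_mul_left (hxsq ▸ ?_) (pow_pos hz0 2)
      gcongr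
    have hprod : z.im * (1 - z.im) ≤ w.im * (1 - w.im) := by linarith
    have hheight : z.re + (R - 1) * (z.re - α) < w.re + (R - 1) * (w.re - α) := by
      have := mul_le_mul_of_nonneg_left hlt.le (sub_nonneg.2 hR)
      linarith
    have hpos : 0 < z.im * (1 - z.im) := mul_pos hz.2.1 (sub_pos.2 hz.2.2)
    have hheight0 : 0 ≤ z.re + (R - 1) * (z.re - α) :=
      add_nonneg hz0.le (mul_nonneg (sub_nonneg.2 hR) (sub_nonneg.2 (le_of_lt hz.1)))
    exact (mul_lt_mul hheight hprod hpos (hheight0.trans hheight.le)).ne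
      (congrArg Complex.im hzw)
  intro z hz w hw hzw
  have hre : z.re = w.re := (hmono w hw z hzw.symm).antisymm (hmono z hz w hzw)
  have hzre : z.re ≠ 0 := (hα.trans hz.1).ne'
  refine Complex.ext hre ?_
  have hx := congrArg Complex.re hzw
  simp only [parabolaMap, hre, add_right_inj] at hx
  have := mul_left_cancel₀ (hre ▸ hzre) hx
  linarith

theorem parabolaMap_mem_curveFamily {c α A R u : ℝ} (hα : 0 < α) (hR : 1 ≤ R)
    (hu : u ∈ Ioo α (α + A)) :
    (fun t : ℝ => parabolaMap c α R ⟨u, t⟩) ∈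
      curveFamily (Ioo (c - (α + A)) (c + (α + A)) ×ℂ Ici 0)
        (Complex.ofReal '' Ioo (c - (α + A)) (c - α))
        (Complex.ofReal '' Ioo (c + α) (c + (α + A))) := by
  have hu0 : 0 < u := hα.trans hu.1
  have hsmooth : ContDiff ℝ 1 fun t : ℝ => parabolaMap c α R ⟨u, t⟩ :=
    (contDiff_parabolaMap c α R).comp (contDiff_complexMk contDiff_const contDiff_id)
  refine ⟨⟨hsmooth.continuous.continuousOn, hsmooth.contDiffOn⟩, fun t ht => ⟨⟨?_, ?_⟩, ?_⟩,
    ⟨c - u, ⟨by linarith [hu.2], by linarith [hu.1]⟩, ?_⟩,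
    ⟨c + u, ⟨by linarith [hu.1], by linarith [hu.2]⟩, ?_⟩⟩
  · change c - (α + A) < c + u * (2 * t - 1)
    nlinarith [mul_nonneg hu0.le ht.1, hu.2]
  · change c + u * (2 * t - 1) < c + (α + A)
    nlinarith [mul_nonneg hu0.le (sub_nonneg.2 ht.2), hu.2]
  · exact mul_nonneg
      (add_nonneg hu0.le (mul_nonneg (sub_nonneg.2 hR) (sub_nonneg.2 hu.1.le)))
      (mul_nonneg ht.1 (sub_nonneg.2 ht.2))
  · simp [Complex.ext_iff, parabolaMap, sub_eq_add_neg]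
  · norm_num [Complex.ext_iff, parabolaMap]

theorem le_widthIn_strip {c α A R : ℝ} (hα : 0 < α) (hA : 0 < A) (hR : 1 ≤ R)
    (hRA : (R - 1) * A ≤ α) :
    ENNReal.ofReal (R / (64 * Real.log (1 + R)) * Real.log (1 + A / α)) ≤
      widthIn (Ioo (c - (α + A)) (c + (α + A)) ×ℂ Ici 0)
        (Complex.ofReal '' Ioo (c - (α + A)) (c - α))
        (Complex.ofReal '' Ioo (c + α) (c + (α + A))) := by
  have hlog : 0 < Real.log (1 + R) := Real.log_pos (by linarith)
  have hdet : ∀ z ∈ Ioo α (α + A) ×ℂ Ioo 0 1, (fderiv ℝ (parabolaMap c α R) z).det ≠ 0 := by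
    intro z hz
    have hz0 : 0 < z.re := hα.trans hz.1.1
    have hw : 0 < z.im * (1 - z.im) := mul_pos hz.2.1 (sub_pos.2 hz.2.2)
    exact abs_pos.1 (lt_of_lt_of_le (by positivity)
      (le_abs_det_fderiv_parabolaMap hα hR hz.1.1 hz.2))
  have hinj : InjOn (parabolaMap c α R) (Ioo α (α + A) ×ℂ Ioo 0 1) :=
    (injOn_parabolaMap hα hR).mono fun _ hz => And.intro hz.1.1 hz.2
  refine le_trans ?_ (lintegral_inv_le_extremalWidth isOpen_Ioo
    (contDiff_parabolaMap c α R).contDiffOn hinj hdet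
    fun u hu => parabolaMap_mem_curveFamily hα hR hu)
  calc ENNReal.ofReal (R / (64 * Real.log (1 + R)) * Real.log (1 + A / α))
      = ENNReal.ofReal (R / (64 * Real.log (1 + R))) *
          ∫⁻ u in Ioo α (α + A), ENNReal.ofReal (u + 0)⁻¹ := by
        rw [setLIntegral_congr Ioo_ae_eq_Icc,
          setLIntegral_Icc_inv_add (by linarith) (by simpa using hα),
          ← ENNReal.ofReal_mul (by positivity), add_zero, add_zero, add_div, div_self hα.ne']
    _ = ∫⁻ u in Ioo α (α + A), (ENNReal.ofReal (64 * u * R⁻¹ * Real.log (1 + R)))⁻¹ := by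
        rw [← lintegral_const_mul' _ _ ENNReal.ofReal_ne_top]
        refine setLIntegral_congr_fun measurableSet_Ioo fun u hu => ?_
        have hu0 : 0 < u := hα.trans hu.1
        rw [← ENNReal.ofReal_mul (by positivity), ← ENNReal.ofReal_inv_of_pos (by positivity)]
        congr 1
        field_simp
        ring
    _ ≤ _ := setLIntegral_mono' measurableSet_Ioo fun u hu =>
        ENNReal.inv_le_inv.2 (setLIntegral_normSq_fderiv_parabolaMap_I_div_le hα hR hRA hu)

end ParabolaFoliation

section CircleArcs

open Function.Periodic (qParam)

theorem unitCirc_eq_qParam (t : ℝ) : unitCirc t = qParam 1 t := by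
  simp only [unitCirc, qParam, Complex.ofReal_one, div_one]

theorem periodic_unitCirc : Function.Periodic unitCirc 1 := fun t => by
  simp only [unitCirc, Complex.ofReal_add, Complex.ofReal_one, mul_add, mul_one, Complex.exp_add,
    Complex.exp_two_pi_mul_I]

theorem norm_unitCirc_sub (t u : ℝ) :
    ‖unitCirc t - unitCirc u‖ = 2 * |Real.sin (Real.pi * (t - u))| := by
  have hfactor : unitCirc t - unitCirc u = Complex.exp ((2 * Real.pi * u : ℝ) * Complex.I) *
      (Complex.exp (Complex.I * (2 * Real.pi * (t - u) : ℝ)) - 1) := by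
    rw [mul_sub_one, ← Complex.exp_add, unitCirc, unitCirc]
    push_cast
    ring_nf
  rw [hfactor, norm_mul, Complex.norm_exp_ofReal_mul_I, one_mul,
    Complex.norm_exp_I_mul_ofReal_sub_one, norm_mul, Real.norm_eq_abs, Real.norm_eq_abs, abs_two,
    mul_assoc 2 Real.pi, mul_div_cancel_left₀ _ two_ne_zero]

theorem norm_unitCirc_sub_le (t u : ℝ) :
    ‖unitCirc t - unitCirc u‖ ≤ 2 * Real.pi * |t - u| := by
  rw [norm_unitCirc_sub, mul_assoc, ← abs_of_pos Real.pi_pos, ← abs_mul, abs_of_pos Real.pi_pos]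
  exact mul_le_mul_of_nonneg_left Real.abs_sin_le_abs two_pos.le

theorem le_norm_unitCirc_sub {t u v : ℝ} (hv : 0 ≤ v) (hvt : v ≤ t - u) (htv : v ≤ 1 - (t - u)) :
    4 * v ≤ ‖unitCirc t - unitCirc u‖ := by
  have hsin : ∀ x : ℝ, v ≤ x → x ≤ 1 / 2 → 2 * v ≤ Real.sin (Real.pi * x) := by
    intro x hvx hx
    calc 2 * v ≤ 2 / Real.pi * (Real.pi * x) := by
          field_simp
          exact hvx
      _ ≤ Real.sin (Real.pi * x) :=
          Real.mul_le_sin (mul_nonneg Real.pi_pos.le (hv.trans hvx))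
            (by nlinarith [Real.pi_pos])
  have habs : 2 * v ≤ Real.sin (Real.pi * (t - u)) := by
    rcases le_total (t - u) (1 / 2) with h | h
    · exact hsin _ hvt h
    · rw [← Real.sin_pi_sub, ← mul_one_sub]
      exact hsin _ htv (by linarith)
  rw [norm_unitCirc_sub]
  linarith [le_abs_self (Real.sin (Real.pi * (t - u)))]

theorem injOn_qParam_one {c w : ℝ} (hw : w ≤ 1 / 2) :
    InjOn (qParam 1) (Ioo (c - w) (c + w) ×ℂ Ici 0) := by
  intro z hz z' hz' heq
  obtain ⟨m, hm⟩ := Function.Periodic.qParam_left_inv_mod_period one_ne_zero z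
  obtain ⟨m', hm'⟩ := Function.Periodic.qParam_left_inv_mod_period one_ne_zero z'
  have hshift : z + m = z' + m' := by simpa [heq, hm'] using hm.symm
  have hre : z.re + m = z'.re + m' := by simpa using congrArg Complex.re hshift
  have hlt : m < m' + 1 := by
    have : (m : ℝ) < m' + 1 := by linarith [hz.1.1, hz'.1.2]
    exact_mod_cast this
  have hlt' : m' < m + 1 := by
    have : (m' : ℝ) < m + 1 := by linarith [hz.1.2, hz'.1.1]
    exact_mod_cast this
  rw [show m = m' by lia] at hshift
  exact add_right_cancel hshift

theorem widthIn_strip_le_widthIn_closedBall {c w : ℝ} (hw : w ≤ 1 / 2) (X Y : Set ℂ) :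
    widthIn (Ioo (c - w) (c + w) ×ℂ Ici 0) X Y ≤
      widthIn (closedBall 0 1) (qParam 1 '' X) (qParam 1 '' Y) := by
  have hmaps : MapsTo (qParam 1) (Ioo (c - w) (c + w) ×ℂ Ici 0) (closedBall 0 1) := by
    intro z hz
    rw [mem_closedBall_zero_iff, Function.Periodic.norm_qParam, Real.exp_le_one_iff, div_one]
    nlinarith [mul_nonneg Real.pi_pos.le (show 0 ≤ z.im from hz.2)]
  have hmeas : MeasurableSet (Ioo (c - w) (c + w) ×ℂ Ici 0) :=
    (Complex.measurable_re measurableSet_Ioo).inter (Complex.measurable_im measurableSet_Ici)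
  exact (widthIn_le_widthIn_image isOpen_univ
    (Function.Periodic.differentiable_qParam).differentiableOn
    hmeas (subset_univ _) (injOn_qParam_one hw) X Y).trans
    (widthIn_mono hmaps.image_subset subset_rfl subset_rfl)

/-- The inner width of the closed unit disk between two arcs of normalized lengths `a` and `b`
separated by a gap of length `g`; the first arc starts at `unitCirc s`, and the arcs and the gap
follow each other counterclockwise. -/
def arcWidth (s a g b : ℝ) : ℝ≥0∞ :=
  widthIn (closedBall 0 1) (unitCirc '' Icc s (s + a))
    (unitCirc '' Icc (s + a + g) (s + a + g + b))

variable {s a g₁ b g₂ d : ℝ}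

theorem arcWidth_swap (hsum : a + g₁ + b + g₂ = 1) :
    arcWidth s a g₁ b = arcWidth (s + a + g₁) b g₂ a := by
  have hperiod : unitCirc '' Icc (s + a + g₁ + b + g₂) (s + a + g₁ + b + g₂ + a) =
      unitCirc '' Icc s (s + a) := by
    have hs : s + a + g₁ + b + g₂ = s + 1 := by linarith
    rw [hs, add_right_comm s 1 a, ← image_add_const_Icc, image_image]
    simp only [periodic_unitCirc _]
  rw [arcWidth, widthIn_comm, arcWidth, hperiod]

theorem le_arcWidth_of_gap_le {R : ℝ} (ha : 0 < a) (hb : 0 < b) (hg₁ : 0 < g₁)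
    (hsum : a + g₁ + b + g₂ = 1) (hg : g₁ ≤ g₂) (hR : 1 ≤ R) (hRab : (R - 1) * min a b ≤ g₁) :
    ENNReal.ofReal (R / (64 * Real.log (1 + R)) * Real.log (1 + min a b / g₁)) ≤
      arcWidth s a g₁ b := by
  have hm : 0 < min a b := lt_min ha hb
  have hma : min a b ≤ a := min_le_left a b
  have hmb : min a b ≤ b := min_le_right a b
  have himage : ∀ B : Set ℝ, qParam 1 '' (Complex.ofReal '' B) = unitCirc '' B := fun B => by
    simp only [image_image, ← unitCirc_eq_qParam]
  have hstrip := (le_widthIn_strip (c := s + a + g₁ / 2) (half_pos hg₁) (half_pos hm) hR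
    (by linarith)).trans (widthIn_strip_le_widthIn_closedBall (by linarith) _ _)
  rw [himage, himage, div_div_div_cancel_right₀ two_ne_zero] at hstrip
  refine hstrip.trans (widthIn_mono subset_rfl (image_mono fun t ht => ?_)
    (image_mono fun t ht => ?_)) <;>
  constructor <;> linarith [ht.1, ht.2]

theorem le_arcWidth {R : ℝ} (ha : 0 < a) (hb : 0 < b) (hg₁ : 0 < g₁) (hg₂ : 0 < g₂)
    (hsum : a + g₁ + b + g₂ = 1) (hR : 1 ≤ R) (hRab : (R - 1) * min a b ≤ min g₁ g₂) :
    ENNReal.ofReal (R / (64 * Real.log (1 + R)) * Real.log (1 + min a b / min g₁ g₂)) ≤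
      arcWidth s a g₁ b := by
  rcases le_total g₁ g₂ with hg | hg
  · rw [min_eq_left hg] at hRab ⊢
    exact le_arcWidth_of_gap_le ha hb hg₁ hsum hg hR hRab
  · rw [min_eq_right hg, min_comm a b] at hRab ⊢
    rw [arcWidth_swap hsum]
    exact le_arcWidth_of_gap_le hb ha hg₂ (by linarith) hg hR hRab

theorem widthIn_image_unitCirc_le {S : Set ℂ} {A B : Set ℝ} {p δ : ℝ} (hδ : 0 ≤ δ) (hd : 0 < d)
    (hA : ∀ t ∈ A, |t - p| ≤ δ)
    (hAB : ∀ t ∈ A, ∀ u ∈ B, |t - p| + d ≤ u - t ∧ |t - p| + d ≤ 1 - (u - t)) :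
    widthIn S (unitCirc '' A) (unitCirc '' B) ≤
      ENNReal.ofReal (18 * Real.pi * Real.log (2 * (2 * Real.pi * δ / d + 1))) := by
  refine widthIn_le_of_norm_sub_add_le (p := unitCirc p) (by positivity) hd ?_ ?_
  · rintro _ ⟨t, ht, rfl⟩
    exact (norm_unitCirc_sub_le t p).trans
      (mul_le_mul_of_nonneg_left (hA t ht) Real.two_pi_pos.le)
  · rintro _ ⟨t, ht, rfl⟩ _ ⟨u, hu, rfl⟩
    obtain ⟨hut, htu⟩ := hAB t ht u hu
    have hp := norm_unitCirc_sub_le t p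
    have hchord := le_norm_unitCirc_sub (by positivity) hut htu
    nlinarith [Real.pi_lt_four, abs_nonneg (t - p)]

theorem arcWidth_le_left (ha : 0 ≤ a) (hd : 0 < d) (hd₁ : d ≤ g₁) (hd₂ : d ≤ g₂)
    (hsum : a + g₁ + b + g₂ = 1) :
    arcWidth s a g₁ b ≤
      ENNReal.ofReal (36 * Real.pi * Real.log (2 * (Real.pi * (a / d) + 1))) := by
  have hhalf : 2 * Real.pi * (a / 2) / d = Real.pi * (a / d) := by ring
  have hstart : widthIn (closedBall 0 1) (unitCirc '' Icc s (s + a / 2))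
      (unitCirc '' Icc (s + a + g₁) (s + a + g₁ + b)) ≤
        ENNReal.ofReal (18 * Real.pi * Real.log (2 * (Real.pi * (a / d) + 1))) := by
    rw [← hhalf]
    refine widthIn_image_unitCirc_le (p := s) (by linarith) hd (fun t ht => ?_)
      fun t ht u hu => ?_ <;>
    rw [abs_of_nonneg (by linarith [ht.1])]
    · linarith [ht.2]
    · constructor <;> linarith [ht.1, ht.2, hu.1, hu.2]
  have hend : widthIn (closedBall 0 1) (unitCirc '' Icc (s + a / 2) (s + a))
      (unitCirc '' Icc (s + a + g₁) (s + a + g₁ + b)) ≤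
        ENNReal.ofReal (18 * Real.pi * Real.log (2 * (Real.pi * (a / d) + 1))) := by
    rw [← hhalf]
    refine widthIn_image_unitCirc_le (p := s + a) (by linarith) hd (fun t ht => ?_)
      fun t ht u hu => ?_ <;>
    rw [abs_of_nonpos (by linarith [ht.2])]
    · linarith [ht.1]
    · constructor <;> linarith [ht.1, ht.2, hu.1, hu.2]
  have hlog : 0 ≤ Real.log (2 * (Real.pi * (a / d) + 1)) := Real.log_nonneg
    (by linarith [mul_nonneg Real.pi_pos.le (div_nonneg ha hd.le)])
  rw [arcWidth, ← Icc_union_Icc_eq_Icc (b := s + a / 2) (by linarith) (by linarith), image_union]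
  refine (widthIn_union_left_le _ _ _ _).trans ((add_le_add hstart hend).trans_eq ?_)
  rw [← ENNReal.ofReal_add (by positivity) (by positivity)]
  ring_nf

theorem arcWidth_le (ha : 0 ≤ a) (hb : 0 ≤ b) (hg₁ : 0 < g₁) (hg₂ : 0 < g₂)
    (hsum : a + g₁ + b + g₂ = 1) :
    arcWidth s a g₁ b ≤ ENNReal.ofReal
      (36 * Real.pi * Real.log (2 * (Real.pi * (min a b / min g₁ g₂) + 1))) := by
  have hd : 0 < min g₁ g₂ := lt_min hg₁ hg₂
  rcases min_choice a b with h | h <;> rw [h]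
  · exact arcWidth_le_left ha hd (min_le_left _ _) (min_le_right _ _) hsum
  · rw [arcWidth_swap hsum]
    exact arcWidth_le_left hb hd (min_le_right _ _) (min_le_left _ _) (by linarith)

theorem arcWidth_le_left_of_le (ha : 0 < a) (hd₁ : d ≤ g₁) (hd₂ : d ≤ g₂)
    (hsum : a + g₁ + b + g₂ = 1) (had : a ≤ d) :
    arcWidth s a g₁ b ≤ ENNReal.ofReal (2 * Real.pi / Real.log (4 / Real.pi * (d / a))) := by
  have hπ := Real.pi_lt_four
  rw [div_mul_div_comm]
  refine widthIn_le_of_annulus (p := unitCirc (s + a / 2)) (by positivity) (by nlinarith) ?_ ?_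
  · rintro _ ⟨t, ht, rfl⟩
    have htp : |t - (s + a / 2)| ≤ a / 2 := abs_le.2 ⟨by linarith [ht.1], by linarith [ht.2]⟩
    refine (norm_unitCirc_sub_le _ _).trans ?_
    nlinarith [Real.pi_pos]
  · rintro _ ⟨t, ht, rfl⟩
    exact le_norm_unitCirc_sub (by linarith) (by linarith [ht.1]) (by linarith [ht.2])

theorem arcWidth_le_of_min_le (ha : 0 < a) (hb : 0 < b) (hsum : a + g₁ + b + g₂ = 1)
    (hmd : min a b ≤ min g₁ g₂) :
    arcWidth s a g₁ b ≤
      ENNReal.ofReal (2 * Real.pi / Real.log (4 / Real.pi * (min g₁ g₂ / min a b))) := by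
  rcases min_choice a b with h | h <;> rw [h] at hmd ⊢
  · exact arcWidth_le_left_of_le ha (min_le_left _ _) (min_le_right _ _) hsum hmd
  · rw [arcWidth_swap hsum]
    exact arcWidth_le_left_of_le hb (min_le_right _ _) (min_le_left _ _) (by linarith) hmd

end CircleArcs

section LogEstimates

variable {x : ℝ}

theorem log_add_one_le_log_one_add (hx : 1 ≤ x) :
    400⁻¹ * (Real.log x + 1) ≤ 1 / (64 * Real.log (1 + 1)) * Real.log (1 + x) := by
  have hlog2 := Real.log_two_gt_d9
  have hlog2' := Real.log_two_lt_d9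
  have hlogx : Real.log x ≤ Real.log (1 + x) := Real.log_le_log (by linarith) (by linarith)
  have htwo : Real.log 2 ≤ Real.log (1 + x) := Real.log_le_log two_pos (by linarith)
  rw [one_add_one_eq_two, div_mul_eq_mul_div, one_mul, le_div_iff₀ (by positivity)]
  nlinarith

theorem inv_log_add_one_le_log_one_add_inv (hx : 1 ≤ x) :
    400⁻¹ * (Real.log x + 1)⁻¹ ≤ x / (64 * Real.log (1 + x)) * Real.log (1 + x⁻¹) := by
  have hx0 : 0 < x := by linarith
  have hlogpos : 0 < Real.log (1 + x) := Real.log_pos (by linarith)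
  have hlog : Real.log (1 + x) ≤ Real.log x + 1 := by
    calc Real.log (1 + x) ≤ Real.log (2 * x) := Real.log_le_log (by linarith) (by linarith)
      _ = Real.log 2 + Real.log x := Real.log_mul two_ne_zero hx0.ne'
      _ ≤ Real.log x + 1 := by linarith [Real.log_two_lt_d9]
  have hinv : (2 * x)⁻¹ ≤ Real.log (1 + x⁻¹) := by
    calc (2 * x)⁻¹ ≤ (x + 1)⁻¹ := inv_anti₀ (by linarith) (by linarith)
      _ = 1 - (1 + x⁻¹)⁻¹ := by field_simp; ring
      _ ≤ Real.log (1 + x⁻¹) := Real.one_sub_inv_le_log_of_pos (by positivity)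
  calc 400⁻¹ * (Real.log x + 1)⁻¹ ≤ 128⁻¹ * (Real.log (1 + x))⁻¹ := by
        gcongr
        · exact inv_nonneg.2 (hlogpos.le.trans hlog)
        · norm_num
    _ = x / (64 * Real.log (1 + x)) * (2 * x)⁻¹ := by field_simp; norm_num
    _ ≤ x / (64 * Real.log (1 + x)) * Real.log (1 + x⁻¹) := by gcongr

theorem log_two_mul_pi_mul_add_one_le (hx : 1 ≤ x) :
    36 * Real.pi * Real.log (2 * (Real.pi * x + 1)) ≤ 400 * (Real.log x + 1) := by
  have hx0 : 0 < x := by linarith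
  have hπ := Real.pi_lt_d2
  have hlogx : 0 ≤ Real.log x := Real.log_nonneg hx
  have hlog : Real.log (2 * (Real.pi * x + 1)) ≤ 4 * Real.log 2 + Real.log x := by
    calc Real.log (2 * (Real.pi * x + 1)) ≤ Real.log (2 ^ 4 * x) :=
          Real.log_le_log (by positivity) (by nlinarith)
      _ = 4 * Real.log 2 + Real.log x := by
          rw [Real.log_mul (by norm_num) hx0.ne', Real.log_pow, Nat.cast_ofNat]
  nlinarith [Real.log_two_lt_d9, Real.pi_pos]

theorem two_pi_div_log_le (hx : 1 ≤ x) :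
    2 * Real.pi / Real.log (4 / Real.pi * x) ≤ 400 * (Real.log x + 1)⁻¹ := by
  have hπ := Real.pi_lt_d2
  have hlogx : 0 ≤ Real.log x := Real.log_nonneg hx
  have hlog : 1 / 5 ≤ Real.log (4 / Real.pi) := by
    have := Real.one_sub_inv_le_log_of_pos (show 0 < 4 / Real.pi by positivity)
    rw [inv_div] at this
    linarith
  rw [Real.log_mul (by positivity) (by linarith), ← div_eq_mul_inv,
    div_le_div_iff₀ (by linarith) (by linarith)]
  nlinarith

end LogEstimates

/-- **Log-Rule for the disk.** For disjoint closed arcs `I`, `J` of the unit circle of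
positive lengths `a`, `b` and complementary gaps `g₁, g₂ > 0`, the inner width over the
closed unit disk satisfies the logarithmic bounds with an absolute constant. -/
theorem log_rule :
    ∃ C : ℝ, 1 ≤ C ∧
      ∀ s a g₁ b g₂ : ℝ, 0 < a → 0 < b → 0 < g₁ → 0 < g₂ →
        a + g₁ + b + g₂ = 1 →
        logBounds C (min a b) (min g₁ g₂)
          (widthIn (closedBall 0 1) (unitCirc '' Icc s (s + a))
            (unitCirc '' Icc (s + a + g₁) (s + a + g₁ + b))) := by
  refine ⟨400, by norm_num, fun s a g₁ b g₂ ha hb hg₁ hg₂ hsum => ?_⟩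
  change logBounds 400 (min a b) (min g₁ g₂) (arcWidth s a g₁ b)
  have hm : 0 < min a b := lt_min ha hb
  have hd : 0 < min g₁ g₂ := lt_min hg₁ hg₂
  refine ⟨fun hdm => ?_, fun hmd => ?_⟩
  · have hratio : 1 ≤ min a b / min g₁ g₂ := (one_le_div hd).2 hdm
    have hlower := le_arcWidth (s := s) ha hb hg₁ hg₂ hsum le_rfl (by simpa using hd.le)
    have hupper := arcWidth_le (s := s) ha.le hb.le hg₁ hg₂ hsum
    exact ⟨(ENNReal.ofReal_le_ofReal (log_add_one_le_log_one_add hratio)).trans hlower,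
      hupper.trans (ENNReal.ofReal_le_ofReal (log_two_mul_pi_mul_add_one_le hratio))⟩
  · have hratio : 1 ≤ min g₁ g₂ / min a b := (one_le_div hm).2 hmd
    have hlower := le_arcWidth (s := s) ha hb hg₁ hg₂ hsum hratio
      (by rw [sub_one_mul, div_mul_cancel₀ _ hm.ne']; linarith)
    have hupper := arcWidth_le_of_min_le (s := s) ha hb hsum hmd
    rw [← inv_div (min g₁ g₂)] at hlower
    exact ⟨(ENNReal.ofReal_le_ofReal (inv_log_add_one_le_log_one_add_inv hratio)).trans hlower,
      hupper.trans (ENNReal.ofReal_le_ofReal (two_pi_div_log_le hratio))⟩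
end
end

section
/- Buffer Lemma (topological). Let x > 0 and let ψ : [0, x] × [0, 1] → ℂ be continuous and injective; write R := ψ([0,x]×[0,1]), call γ_t := ψ({t}×[0,1]) the vertical curves of R, and ∂ʰR := ψ([0,x]×{0,1}) the horizontal boundary of R. Let D ⊆ ℂ be a closed Jordan disk with R ⊆ D and with ∂ʰR contained in the frontier ∂D of D, and let O ⊆ ℂ be a connected set with O ∩ ∂ʰR = ∅ and O ∩ (∂D ∖ ∂ʰR) ≠ ∅. Set T := {t ∈ [0, x] : γ_t ∩ O ≠ ∅}. Then: (i) the complement [0, x] ∖ T is order-convex (if t₁ < t < t₂ and t₁, t₂ ∉ T then t ∉ T), and if T is nonempty then 0 ∈ T or x ∈ T — so the vertical curves of R meeting O form one or two buffers adjacent to the vertical sides of R; (ii) if in addition O intersects only one of the two connected components of ∂D ∖ ∂ʰR, then T is itself order-convex, i.e. the vertical curves meeting O form a single buffer. -/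
noncomputable section

open Set Metric

/-! An odd function on a circle has no continuous logarithm, because the increment between
antipodal points would have to vanish. Hence an injective planar map is open (invariance of domain),
and the frontier of `ψ([t₁,t₂]×[0,1])` is contained in the image of the boundary of
`[t₁,t₂]×[0,1]`. A connected set missing that image but meeting `ψ([t₁,t₂]×[0,1])` lies in its
interior, so it cannot reach `∂D`; this is (i).

For (ii), the curve `γ_t` is a crosscut of `D`. After transport to the unit disk, comparing the
increment along `γ_t` of a logarithm of `γ_t - z` with a half-plane coordinate of `z` shows that
`γ_t` separates the two arcs of the circle between its endpoints. The strips of `R` on the two sides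
of `γ_t` touch different arcs, so a connected subset of `D` meeting both strips meets `γ_t`. The set
`O` itself need not stay in `D`, but the union of `O ∩ D` with the only component of `∂D ∖ ∂ʰR` that
`O` meets is connected, and that component does not meet `γ_t`. -/

section Connectedness

variable {X : Type*} [TopologicalSpace X] {O A C : Set X}

theorem subset_interior_of_disjoint_frontier (hO : IsPreconnected O)
    (hOA : Disjoint O (frontier A)) (hne : (O ∩ A).Nonempty) : O ⊆ interior A := by
  have hcover : O ⊆ interior A ∪ (closure A)ᶜ := fun z hz =>
    or_iff_not_imp_left.2 fun hint hcl => disjoint_left.1 hOA hz ⟨hcl, hint⟩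
  obtain ⟨p, hpO, hpA⟩ := hne
  have hp : p ∈ interior A :=
    (hcover hpO).resolve_right fun hcl => hcl (subset_closure hpA)
  exact hO.subset_left_of_subset_union isOpen_interior isClosed_closure.isOpen_compl
    (disjoint_compl_right.mono_left interior_subset_closure) hcover ⟨p, hpO, hp⟩

theorem isPreconnected_inter_union_of_frontier_subset (hO : IsPreconnected O) (hA : IsClosed A)
    (hC : IsPreconnected C) (hOC : O ∩ frontier A ⊆ C) (hne : (O ∩ frontier A).Nonempty) :
    IsPreconnected (O ∩ A ∪ C) := by
  classical
  refine isPreconnected_of_forall_constant fun f hf => ?_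
  obtain ⟨p, hpO, hpA⟩ := hne
  have hfC : ∀ z ∈ C, f z = f p := fun z hz =>
    hC.constant (hf.mono subset_union_right) hz (hOC ⟨hpO, hpA⟩)
  have hg : ContinuousOn (A.piecewise f fun _ => f p) O :=
    ContinuousOn.piecewise (fun z hz => hfC z (hOC hz))
      (hf.mono (by rw [hA.closure_eq]; exact subset_union_left)) continuousOn_const
  have hfO : ∀ z ∈ O ∩ A, f z = f p := fun z hz => by
    simpa [hz.2, hA.frontier_subset hpA] using hO.constant hg hz.1 hpO
  have hfp : ∀ z ∈ O ∩ A ∪ C, f z = f p := fun z hz => hz.elim (hfO z) (hfC z)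
  exact fun y hy z hz => (hfp y hy).trans (hfp z hz).symm

theorem continuousOn_invFunOn_image {Y : Type*} [TopologicalSpace Y] [T2Space Y] [Nonempty X]
    {f : X → Y} {K : Set X} (hK : IsCompact K) (hf : ContinuousOn f K) (hinj : InjOn f K) :
    ContinuousOn (Function.invFunOn f K) (f '' K) := by
  refine continuousOn_iff_isClosed.2 fun F hF => ⟨f '' (K ∩ F),
    ((hK.inter_right hF).image_of_continuousOn (hf.mono inter_subset_left)).isClosed, ?_⟩
  ext y
  refine and_congr_left ?_
  rintro ⟨x, hx, rfl⟩
  rw [mem_preimage, hinj.leftInvOn_invFunOn hx, hinj.mem_image_iff inter_subset_left hx]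
  exact (and_iff_right hx).symm

end Connectedness

section ContinuousLog

open Complex unitInterval

variable {X : Type*} [TopologicalSpace X]

theorem exists_continuous_log_of_homotopy {H : I × X → ℂ} (hH : Continuous H)
    (hH0 : ∀ p, H p ≠ 0) {L₀ : X → ℂ} (hL₀ : Continuous L₀)
    (hexp : ∀ x, exp (L₀ x) = H (0, x)) :
    ∃ L : I × X → ℂ, Continuous L ∧ (∀ x, L (0, x) = L₀ x) ∧ ∀ p, exp (L p) = H p := by
  let H' : C(I × X, {z : ℂ // z ≠ 0}) := ⟨fun p => ⟨H p, hH0 p⟩, by fun_prop⟩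
  have hzero : ∀ x, H' (0, x) = ⟨exp (L₀ x), exp_ne_zero _⟩ := fun x => Subtype.ext (hexp x).symm
  exact ⟨isCoveringMap_exp.liftHomotopy H' ⟨L₀, hL₀⟩ hzero, map_continuous _,
    isCoveringMap_exp.liftHomotopy_zero H' ⟨L₀, hL₀⟩ hzero, fun p => congrArg Subtype.val
      (congrFun (isCoveringMap_exp.liftHomotopy_lifts H' ⟨L₀, hL₀⟩ hzero) p)⟩

theorem eq_of_continuous_of_exp_eq_const [PreconnectedSpace X] {L : X → ℂ} (hL : Continuous L)
    {c : ℂ} (hexp : ∀ x, exp (L x) = c) (x y : X) : L x = L y :=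
  isCoveringMap_exp.const_of_comp hL
    (fun x y => Subtype.ext ((hexp x).trans (hexp y).symm)) x y

/-- `f` has a continuous logarithm. For loops this says that the winding number about `0`
vanishes, which is how it is used here. -/
def HasContinuousLog (f : X → ℂ) : Prop :=
  ∃ L : X → ℂ, Continuous L ∧ ∀ x, exp (L x) = f x

namespace HasContinuousLog

theorem const {c : ℂ} (hc : c ≠ 0) : HasContinuousLog fun _ : X => c :=
  ⟨fun _ => log c, continuous_const, fun _ => exp_log hc⟩

theorem of_homotopy {H : I × X → ℂ} (hH : Continuous H) (hH0 : ∀ p, H p ≠ 0)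
    (h : HasContinuousLog fun x => H (0, x)) : HasContinuousLog fun x => H (1, x) := by
  obtain ⟨L₀, hL₀, hexp₀⟩ := h
  obtain ⟨L, hL, -, hexp⟩ := exists_continuous_log_of_homotopy hH hH0 hL₀ hexp₀
  exact ⟨fun x => L (1, x), by fun_prop, fun x => hexp (1, x)⟩

theorem of_norm_sub_lt {f g : X → ℂ} (hf : HasContinuousLog f) (hg : Continuous g)
    (hfg : ∀ x, ‖g x - f x‖ < ‖f x‖) : HasContinuousLog g := by
  have hfc : Continuous f := by
    obtain ⟨L, hL, hexp⟩ := hf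
    exact (continuous_exp.comp hL).congr hexp
  have hne : ∀ p : I × X, f p.2 + (p.1 : ℝ) * (g p.2 - f p.2) ≠ 0 := by
    rintro ⟨s, x⟩ h
    have hfx : f x = -((s : ℝ) * (g x - f x)) := eq_neg_of_add_eq_zero_left h
    refine (hfg x).not_ge ?_
    calc ‖f x‖ = s * ‖g x - f x‖ := (congrArg norm hfx).trans (by
          rw [norm_neg, norm_mul, norm_real, Real.norm_of_nonneg s.2.1])
      _ ≤ ‖g x - f x‖ := mul_le_of_le_one_left (norm_nonneg _) s.2.2
  simpa using of_homotopy (by fun_prop) hne (by simpa using hf)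

theorem not_of_odd [PreconnectedSpace X] [Nonempty X] [InvolutiveNeg X] [ContinuousNeg X]
    {f : X → ℂ} (hf : Function.Odd f) : ¬ HasContinuousLog f := by
  rintro ⟨L, hL, hexp⟩
  have hdiff : ∀ x, exp (L (-x) - L x) = -1 := fun x => by
    rw [exp_sub, hexp, hf, ← hexp, neg_div, div_self (exp_ne_zero _)]
  obtain ⟨x⟩ := ‹Nonempty X›
  have hconst := eq_of_continuous_of_exp_eq_const (by fun_prop) hdiff (-x) x
  rw [neg_neg] at hconst
  have hzero : L (-x) - L x = 0 := by linear_combination -hconst / 2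
  have := hdiff x
  rw [hzero, exp_zero] at this
  norm_num at this

end HasContinuousLog

theorem eq_log_div_of_forall_re_pos {f L : I → ℂ} (hf : Continuous f) (hre : ∀ s, 0 < (f s).re)
    (hL : Continuous L) (hL0 : L 0 = 0) (hexp : ∀ s, exp (L s) = f s / f 0) :
    L 1 = log (f 1 / f 0) := by
  have hf0 : ∀ s, f s ≠ 0 := fun s h => by simpa [h] using hre s
  have hlog : Continuous fun s => log (f s) := hf.clog fun s => Or.inl (hre s)
  have hconst := eq_of_continuous_of_exp_eq_const (L := fun s => L s - log (f s)) (by fun_prop)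
    (c := (f 0)⁻¹) (fun s => by
      rw [exp_sub, hexp, exp_log (hf0 s), div_right_comm, div_self (hf0 s), one_div]) 1 0
  have him : (L 1).im = arg (f 1) - arg (f 0) := by
    have := congrArg im hconst
    simp only [sub_im, hL0, zero_im, log_im] at this
    linarith
  have h0 := abs_lt.1 (abs_arg_lt_pi_div_two_iff.2 (Or.inl (hre 0)))
  have h1 := abs_lt.1 (abs_arg_lt_pi_div_two_iff.2 (Or.inl (hre 1)))
  rw [← hexp, log_exp] <;> linarith

end ContinuousLog

section InvarianceOfDomain

open unitInterval

variable {f : ℂ → ℂ} {c : ℂ} {r : ℝ}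

theorem add_mul_mem_closedBall {t : ℝ} (ht : |t| ≤ 1) (z : sphere (0 : ℂ) r) :
    c + t * z ∈ closedBall c r := by
  have hz : ‖(z : ℂ)‖ = r := mem_sphere_zero_iff_norm.1 z.2
  rw [mem_closedBall, dist_self_add_left, norm_mul, Complex.norm_real, Real.norm_eq_abs]
  exact (mul_le_of_le_one_left (norm_nonneg _) ht).trans_eq hz

theorem hasContinuousLog_sub_of_notMem_image_closedBall {q : ℂ}
    (hf : ContinuousOn f (closedBall c r)) (hr : 0 ≤ r) (hq : q ∉ f '' closedBall c r) :
    HasContinuousLog fun z : sphere (0 : ℂ) r => f (c + z) - q := by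
  have hmem : ∀ p : I × sphere (0 : ℂ) r, c + (p.1 : ℝ) * p.2 ∈ closedBall c r := fun p =>
    add_mul_mem_closedBall (abs_le.2 ⟨by linarith [p.1.2.1], p.1.2.2⟩) p.2
  have hne : ∀ z ∈ closedBall c r, f z - q ≠ 0 := fun z hz h => hq ⟨z, hz, sub_eq_zero.1 h⟩
  have hconst : HasContinuousLog fun _ : sphere (0 : ℂ) r => f c - q :=
    .const (hne c (mem_closedBall_self hr))
  simpa using HasContinuousLog.of_homotopy
    ((hf.comp_continuous (by fun_prop) hmem).sub continuous_const)
    (fun p => hne _ (hmem p)) (by simpa using hconst)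

theorem not_hasContinuousLog_sub_center (hf : ContinuousOn f (closedBall c r))
    (hinj : InjOn f (closedBall c r)) (hr : 0 < r) :
    ¬ HasContinuousLog fun z : sphere (0 : ℂ) r => f (c + z) - f c := by
  have : ConnectedSpace (sphere (0 : ℂ) r) :=
    Subtype.connectedSpace (isConnected_sphere (by simp) 0 hr.le)
  have hmem : ∀ z : sphere (0 : ℂ) r, c + z ∈ closedBall c r := fun z => by simp
  have hmem' : ∀ p : I × sphere (0 : ℂ) r, c + (-p.1 : ℝ) * p.2 ∈ closedBall c r := fun p =>
    add_mul_mem_closedBall (abs_le.2 ⟨by linarith [p.1.2.2], by linarith [p.1.2.1]⟩) p.2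
  have hne : ∀ p : I × sphere (0 : ℂ) r, f (c + p.2) - f (c + (-p.1 : ℝ) * p.2) ≠ 0 := by
    rintro ⟨s, z⟩ h
    have hz : (1 + (s : ℝ) : ℂ) * z = 0 := by
      have := hinj (hmem z) (hmem' (s, z)) (sub_eq_zero.1 h)
      push_cast at this
      linear_combination this
    have hs : (1 + (s : ℝ) : ℂ) ≠ 0 := by
      exact_mod_cast (by linarith [s.2.1] : (0 : ℝ) < 1 + s).ne'
    exact ne_of_mem_sphere z.2 hr.ne' ((mul_eq_zero.1 hz).resolve_left hs)
  have hcont : Continuous fun p : I × sphere (0 : ℂ) r =>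
      f (c + p.2) - f (c + (-p.1 : ℝ) * p.2) :=
    (hf.comp_continuous (f := fun p : I × sphere (0 : ℂ) r => c + p.2) (by fun_prop)
      fun p => hmem p.2).sub (hf.comp_continuous (by fun_prop) hmem')
  intro h
  refine HasContinuousLog.not_of_odd ?_ (HasContinuousLog.of_homotopy hcont hne (by simpa using h))
  intro z
  simp

theorem map_center_mem_interior_image_closedBall (hf : ContinuousOn f (closedBall c r))
    (hinj : InjOn f (closedBall c r)) (hr : 0 < r) : f c ∈ interior (f '' closedBall c r) := by
  by_contra hc
  have hfc : f c ∉ f '' sphere c r := by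
    rintro ⟨z, hz, hzc⟩
    exact ne_of_mem_sphere hz hr.ne'
      (hinj (sphere_subset_closedBall hz) (mem_closedBall_self hr.le) hzc)
  have hclosed : IsClosed (f '' sphere c r) :=
    ((isCompact_sphere c r).image_of_continuousOn (hf.mono sphere_subset_closedBall)).isClosed
  obtain ⟨ε, hε, hball⟩ := Metric.mem_nhds_iff.1 (hclosed.isOpen_compl.mem_nhds hfc)
  rw [← mem_compl_iff, ← closure_compl] at hc
  obtain ⟨q, hq, hdist⟩ := Metric.mem_closure_iff.1 hc (ε / 2) (half_pos hε)
  have hmem : ∀ z : sphere (0 : ℂ) r, c + z ∈ sphere c r := fun z => by simp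
  refine not_hasContinuousLog_sub_center hf hinj hr
    ((hasContinuousLog_sub_of_notMem_image_closedBall hf hr.le hq).of_norm_sub_lt ?_ fun z => ?_)
  · exact (hf.comp_continuous (by fun_prop) fun z => sphere_subset_closedBall (hmem z)).sub
      continuous_const
  · have hfar : ε ≤ dist (f (c + z)) (f c) := by
      by_contra! h
      exact hball h ⟨_, hmem z, rfl⟩
    have htri := dist_triangle_right (f (c + z)) (f c) q
    rw [sub_sub_sub_cancel_left, ← dist_eq_norm, ← dist_eq_norm, dist_comm q]
    linarith

variable {E : Type*} [NormedAddCommGroup E] [NormedSpace ℝ E] {g : E → ℂ} {K : Set E}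

theorem image_interior_subset_interior_image (hE : Module.finrank ℝ E = 2)
    (hg : ContinuousOn g K) (hinj : InjOn g K) : g '' interior K ⊆ interior (g '' K) := by
  have : FiniteDimensional ℝ E := .of_finrank_eq_succ hE
  let e : ℂ ≃L[ℝ] E := .ofFinrankEq (Complex.finrank_real_complex.trans hE.symm)
  rintro _ ⟨x, hx, rfl⟩
  have hnhds : e ⁻¹' K ∈ nhds (e.symm x) :=
    e.continuous.continuousAt.preimage_mem_nhds (by simpa using mem_interior_iff_mem_nhds.1 hx)
  obtain ⟨r, hr, hrK⟩ := nhds_basis_closedBall.mem_iff.1 hnhds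
  have hmaps : MapsTo e (closedBall (e.symm x) r) K := hrK
  have hint := map_center_mem_interior_image_closedBall
    (hg.comp e.continuous.continuousOn hmaps) (hinj.comp e.injective.injOn hmaps) hr
  rw [Function.comp_apply, e.apply_symm_apply, image_comp] at hint
  exact interior_mono (image_mono hmaps.image_subset) hint

theorem frontier_image_subset_image_frontier (hE : Module.finrank ℝ E = 2) (hK : IsCompact K)
    (hg : ContinuousOn g K) (hinj : InjOn g K) : frontier (g '' K) ⊆ g '' frontier K := by
  intro y hy
  obtain ⟨x, hx, rfl⟩ := (hK.image_of_continuousOn hg).isClosed.frontier_subset hy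
  exact ⟨x, ⟨subset_closure hx, fun hint =>
    hy.2 (image_interior_subset_interior_image hE hg hinj ⟨x, hint, rfl⟩)⟩, rfl⟩

end InvarianceOfDomain

section Crosscut

open Complex ComplexOrder unitInterval

theorem re_one_sub_pos {v : ℂ} (hv : ‖v‖ ≤ 1) (hv1 : v ≠ 1) : 0 < (1 - v).re := by
  rw [sub_re, one_re, sub_pos]
  refine lt_of_le_of_ne ((re_le_norm v).trans hv) fun hre => hv1 (Complex.ext hre ?_)
  have him : (0 : ℂ) ≤ v :=
    re_eq_norm.1 (le_antisymm (re_le_norm v) (hv.trans_eq hre.symm))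
  exact (nonneg_iff.1 him).2.symm

/-- The Möbius map from the closed unit disk to the closed right half-plane which, for distinct
`a` and `b` on the unit circle, sends `a` to `∞`, `b` to `0` and the circle to the imaginary axis.
The sign of its imaginary part tells apart the two arcs between `a` and `b`. At `z = a` it has a
junk value. -/
def crosscutCoord (a b z : ℂ) : ℂ :=
  herglotzRieszKernel 0 z a - herglotzRieszKernel 0 b a

variable {a b z : ℂ}

theorem crosscutCoord_eq (hab : a ≠ b) (hza : z ≠ a) :
    crosscutCoord a b z = 2 * a * (z - b) / ((a - z) * (a - b)) := by
  have hz := sub_ne_zero.2 hza.symm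
  have hb := sub_ne_zero.2 hab
  simp only [crosscutCoord, herglotzRieszKernel_def, sub_zero]
  field_simp
  ring

theorem crosscutCoord_self_right : crosscutCoord a b b = 0 := sub_self _

theorem re_crosscutCoord (ha : ‖a‖ = 1) (hb : ‖b‖ = 1) :
    (crosscutCoord a b z).re = (1 - ‖z‖ ^ 2) / ‖a - z‖ ^ 2 := by
  have hre : ∀ w, (herglotzRieszKernel 0 w a).re = (1 - ‖w‖ ^ 2) / ‖a - w‖ ^ 2 := fun w => by
    simpa [ha, poissonKernel_def] using
      (congrFun (poissonKernel_eq_re_herglotzRieszKernel (c := 0) (w := w)) a).symm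
  simp [crosscutCoord, hre, hb]

theorem crosscutCoord_mul (ha : a ≠ 0) (hab : a ≠ b) (hza : z ≠ a) :
    crosscutCoord a b z * ((b / a - 1) / 2) = (b - z) / (a - z) := by
  have hz := sub_ne_zero.2 hza.symm
  have hb := sub_ne_zero.2 hab
  rw [crosscutCoord_eq hab hza]
  field_simp
  ring

theorem injOn_crosscutCoord (ha : a ≠ 0) (hab : a ≠ b) : InjOn (crosscutCoord a b) {a}ᶜ := by
  intro z hz w hw h
  have hz' := sub_ne_zero.2 (Ne.symm hz)
  have hw' := sub_ne_zero.2 (Ne.symm hw)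
  have hratio := (crosscutCoord_mul ha hab hz).symm.trans (h ▸ crosscutCoord_mul ha hab hw)
  rw [div_eq_div_iff hz' hw'] at hratio
  exact mul_left_cancel₀ (sub_ne_zero.2 hab) (by linear_combination -hratio)

theorem continuousOn_crosscutCoord : ContinuousOn (crosscutCoord a b) {a}ᶜ := by
  unfold crosscutCoord
  simp only [herglotzRieszKernel_def, sub_zero]
  exact ((continuousOn_const.add continuousOn_id).div (continuousOn_const.sub continuousOn_id)
    fun z hz => sub_ne_zero.2 (Ne.symm hz)).sub continuousOn_const

theorem crosscutCoord_mem_slitPlane (ha : ‖a‖ = 1) (hb : ‖b‖ = 1) (hab : a ≠ b)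
    (hz : ‖z‖ ≤ 1) (hza : z ≠ a) (hzb : z ≠ b) : crosscutCoord a b z ∈ slitPlane := by
  have ha0 : a ≠ 0 := norm_ne_zero_iff.1 (by simp [ha])
  have hre : 0 ≤ (crosscutCoord a b z).re := by
    rw [re_crosscutCoord ha hb]
    exact div_nonneg (sub_nonneg.2 (pow_le_one₀ (norm_nonneg z) hz)) (sq_nonneg _)
  rw [mem_slitPlane_iff_not_le_zero]
  refine fun hle => hzb (injOn_crosscutCoord ha0 hab hza hab.symm ?_)
  rw [crosscutCoord_self_right]
  exact Complex.ext (le_antisymm (nonpos_iff.1 hle).1 hre) (nonpos_iff.1 hle).2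

theorem im_sub_div_sub (ha : ‖a‖ = 1) (hb : ‖b‖ = 1) (hab : a ≠ b) (hz : ‖z‖ = 1) (hza : z ≠ a) :
    ((b - z) / (a - z)).im = -((crosscutCoord a b z).im * (1 - b / a).re / 2) := by
  have hre : (crosscutCoord a b z).re = 0 := by simp [re_crosscutCoord ha hb, hz]
  rw [← crosscutCoord_mul (norm_ne_zero_iff.1 (by simp [ha])) hab hza, mul_im, hre]
  simp [sub_re, div_ofNat_re]
  ring

theorem eq_log_div_of_norm_eq_one {Γ L : I → ℂ} (hΓ : Continuous Γ) (hball : ∀ s, ‖Γ s‖ ≤ 1)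
    (hz : ‖z‖ = 1) (hzΓ : ∀ s, Γ s ≠ z) (hL : Continuous L) (hL0 : L 0 = 0)
    (hexp : ∀ s, exp (L s) = (Γ s - z) / (Γ 0 - z)) : L 1 = log ((Γ 1 - z) / (Γ 0 - z)) := by
  have hz0 : z ≠ 0 := norm_ne_zero_iff.1 (by simp [hz])
  have hratio : ∀ s, (1 - Γ s / z) / (1 - Γ 0 / z) = (Γ s - z) / (Γ 0 - z) := fun s => by
    rw [one_sub_div hz0, one_sub_div hz0, div_div_div_cancel_right₀ hz0,
      ← neg_div_neg_eq, neg_sub, neg_sub]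
  rw [← hratio 1]
  refine eq_log_div_of_forall_re_pos (f := fun s => 1 - Γ s / z) (by fun_prop)
    (fun s => re_one_sub_pos ?_ ?_) hL hL0 fun s => (hexp s).trans (hratio s).symm
  · rw [norm_div, hz, div_one]
    exact hball s
  · rw [Ne, div_eq_one_iff_eq hz0]
    exact hzΓ s

/-- For `z` on the unit circle, `log ((Γ 1 - z) / (Γ 0 - z))` is the increment of a continuous
logarithm of `Γ - z` along `Γ`; it varies with `z` only as much as the logarithm of the
coordinate. -/
theorem log_div_sub_log_crosscutCoord_eq {Γ : I → ℂ} (hΓ : Continuous Γ)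
    (hball : ∀ s, ‖Γ s‖ ≤ 1) (h0 : ‖Γ 0‖ = 1) (h1 : ‖Γ 1‖ = 1) (h01 : Γ 0 ≠ Γ 1)
    {S : Set ℂ} (hS : IsPreconnected S) (hSball : ∀ z ∈ S, ‖z‖ ≤ 1)
    (hSΓ : Disjoint S (range Γ)) {w : ℂ} (hzS : z ∈ S) (hwS : w ∈ S) (hz : ‖z‖ = 1)
    (hw : ‖w‖ = 1) :
    log ((Γ 1 - z) / (Γ 0 - z)) - log (crosscutCoord (Γ 0) (Γ 1) z) =
      log ((Γ 1 - w) / (Γ 0 - w)) - log (crosscutCoord (Γ 0) (Γ 1) w) := by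
  have hne : ∀ (s : I) (v : S), Γ s ≠ v := fun s v h =>
    disjoint_left.1 hSΓ (h ▸ v.2) (mem_range_self s)
  have hsub : ∀ (s : I) (v : S), Γ s - v ≠ 0 := fun s v => sub_ne_zero.2 (hne s v)
  obtain ⟨L, hL, hL0, hexp⟩ := exists_continuous_log_of_homotopy (X := S) (L₀ := 0)
    (H := fun p => (Γ p.1 - p.2) / (Γ 0 - p.2))
    (.div (by fun_prop) (by fun_prop) fun p => hsub 0 p.2)
    (fun p => div_ne_zero (hsub p.1 p.2) (hsub 0 p.2)) continuous_const
    (fun v => by simp [div_self (hsub 0 v)])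
  have hslit : ∀ v : S, crosscutCoord (Γ 0) (Γ 1) v ∈ slitPlane := fun v =>
    crosscutCoord_mem_slitPlane h0 h1 h01 (hSball v v.2) (hne 0 v).symm (hne 1 v).symm
  have hcoord : Continuous fun v : S => crosscutCoord (Γ 0) (Γ 1) v :=
    continuousOn_crosscutCoord.comp_continuous continuous_subtype_val fun v => (hne 0 v).symm
  have hexp_sub : ∀ v : S, exp (L (1, v) - log (crosscutCoord (Γ 0) (Γ 1) v)) =
      (Γ 1 / Γ 0 - 1) / 2 := fun v => by
    have hv := slitPlane_ne_zero (hslit v)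
    rw [exp_sub, hexp, exp_log hv, div_eq_iff hv, mul_comm]
    exact (crosscutCoord_mul (norm_ne_zero_iff.1 (by simp [h0])) h01 (hne 0 v).symm).symm
  have hend : ∀ v : S, ‖(v : ℂ)‖ = 1 → L (1, v) = log ((Γ 1 - v) / (Γ 0 - v)) := fun v hv =>
    eq_log_div_of_norm_eq_one (L := fun s => L (s, v)) hΓ hball hv (hne · v) (by fun_prop)
      (hL0 v) fun s => hexp (s, v)
  have : PreconnectedSpace S := Subtype.preconnectedSpace hS
  rw [← hend ⟨z, hzS⟩ hz, ← hend ⟨w, hwS⟩ hw]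
  exact eq_of_continuous_of_exp_eq_const ((hL.comp (by fun_prop)).sub (hcoord.clog hslit))
    hexp_sub ⟨z, hzS⟩ ⟨w, hwS⟩

theorem im_crosscutCoord_nonneg_of_isPreconnected {Γ : I → ℂ} (hΓ : Continuous Γ)
    (hball : ∀ s, ‖Γ s‖ ≤ 1) (h0 : ‖Γ 0‖ = 1) (h1 : ‖Γ 1‖ = 1) (h01 : Γ 0 ≠ Γ 1)
    {S : Set ℂ} (hS : IsPreconnected S) (hSball : ∀ z ∈ S, ‖z‖ ≤ 1)
    (hSΓ : Disjoint S (range Γ)) {w : ℂ} (hzS : z ∈ S) (hwS : w ∈ S) (hz : ‖z‖ = 1)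
    (hw : ‖w‖ = 1) (hpos : 0 < (crosscutCoord (Γ 0) (Γ 1) z).im) :
    0 ≤ (crosscutCoord (Γ 0) (Γ 1) w).im := by
  have him := congrArg im
    (log_div_sub_log_crosscutCoord_eq hΓ hball h0 h1 h01 hS hSball hSΓ hzS hwS hz hw)
  simp only [sub_im, log_im] at him
  have hΓ01 : 0 < (1 - Γ 1 / Γ 0).re :=
    re_one_sub_pos (by simp [h0, h1]) (div_ne_one_of_ne h01.symm)
  have hne : ∀ v ∈ S, v ≠ Γ 0 := fun v hv h => disjoint_left.1 hSΓ hv (h ▸ mem_range_self 0)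
  by_contra! hneg
  have hargz : arg ((Γ 1 - z) / (Γ 0 - z)) < 0 := by
    rw [arg_neg_iff, im_sub_div_sub h0 h1 h01 hz (hne z hzS), neg_neg_iff_pos]
    positivity
  have hargw : 0 ≤ arg ((Γ 1 - w) / (Γ 0 - w)) := by
    rw [arg_nonneg_iff, im_sub_div_sub h0 h1 h01 hw (hne w hwS)]
    nlinarith
  have hargz' : 0 ≤ arg (crosscutCoord (Γ 0) (Γ 1) z) := arg_nonneg_iff.2 hpos.le
  have hargw' : arg (crosscutCoord (Γ 0) (Γ 1) w) < 0 := arg_neg_iff.2 hneg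
  linarith

end Crosscut

section Rectangle

open unitInterval

variable {ψ : ℝ × ℝ → ℂ} {φ : ℂ → ℂ} {p q t t₁ t₂ : ℝ} {O S C D : Set ℂ}

/-- The vertical curve `γ_t` of the topological rectangle `ψ '' (Icc p q ×ˢ Icc 0 1)`, for
`t ∈ Icc p q`. -/
def verticalCurve (ψ : ℝ × ℝ → ℂ) (t : ℝ) : Set ℂ :=
  ψ '' ({t} ×ˢ Icc (0 : ℝ) 1)

/-- The horizontal boundary of the topological rectangle `ψ '' (Icc p q ×ˢ Icc 0 1)`: the images
of its bottom and top edges. -/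
def horizontalBoundary (ψ : ℝ × ℝ → ℂ) (p q : ℝ) : Set ℂ :=
  ψ '' (Icc p q ×ˢ ({0, 1} : Set ℝ))

theorem isPreconnected_image_strip {A : Set ℝ} (hψc : ContinuousOn ψ (Icc p q ×ˢ Icc (0 : ℝ) 1))
    (hA : A ⊆ Icc p q) (hAc : A.OrdConnected) : IsPreconnected (ψ '' (A ×ˢ Icc (0 : ℝ) 1)) :=
  (hAc.isPreconnected.prod isPreconnected_Icc).image ψ (hψc.mono (prod_mono_left hA))

theorem disjoint_image_strip_verticalCurve {A : Set ℝ}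
    (hψi : InjOn ψ (Icc p q ×ˢ Icc (0 : ℝ) 1)) (hA : A ⊆ Icc p q) (ht : t ∈ Icc p q)
    (htA : t ∉ A) : Disjoint (ψ '' (A ×ˢ Icc (0 : ℝ) 1)) (verticalCurve ψ t) := by
  rw [verticalCurve, disjoint_iff_inter_eq_empty, ← hψi.image_inter (prod_mono_left hA)
    (prod_mono_left (singleton_subset_iff.2 ht)), prod_inter_prod, inter_singleton_eq_empty.2 htA,
    empty_prod, image_empty]

theorem frontier_image_rectangle_subset (hpq : p ≤ q)
    (hψc : ContinuousOn ψ (Icc p q ×ˢ Icc (0 : ℝ) 1)) (hψi : InjOn ψ (Icc p q ×ˢ Icc (0 : ℝ) 1)) :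
    frontier (ψ '' (Icc p q ×ˢ Icc (0 : ℝ) 1)) ⊆
      horizontalBoundary ψ p q ∪ (verticalCurve ψ p ∪ verticalCurve ψ q) := by
  refine (frontier_image_subset_image_frontier (by simp) (isCompact_Icc.prod isCompact_Icc)
    hψc hψi).trans_eq ?_
  simp only [verticalCurve, horizontalBoundary, frontier_prod_eq, closure_Icc, frontier_Icc hpq,
    frontier_Icc zero_le_one, ← image_union, ← union_prod, singleton_union]

theorem nonempty_inter_side_of_nonempty_inter_verticalCurve
    (hψc : ContinuousOn ψ (Icc p q ×ˢ Icc (0 : ℝ) 1)) (hψi : InjOn ψ (Icc p q ×ˢ Icc (0 : ℝ) 1))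
    (hO : IsPreconnected O) (hOh : Disjoint O (horizontalBoundary ψ p q))
    (hOint : ¬ O ⊆ interior (ψ '' (Icc p q ×ˢ Icc (0 : ℝ) 1))) (ht : t ∈ Icc p q)
    (htO : (verticalCurve ψ t ∩ O).Nonempty) :
    (verticalCurve ψ p ∩ O).Nonempty ∨ (verticalCurve ψ q ∩ O).Nonempty := by
  by_contra! hsides
  have hOfr : Disjoint O (frontier (ψ '' (Icc p q ×ˢ Icc (0 : ℝ) 1))) :=
    (hOh.union_right ((disjoint_iff_inter_eq_empty.2 hsides.1).symm.union_right
      (disjoint_iff_inter_eq_empty.2 hsides.2).symm)).mono_right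
        (frontier_image_rectangle_subset (ht.1.trans ht.2) hψc hψi)
  refine hOint (subset_interior_of_disjoint_frontier hO hOfr (htO.mono ?_))
  rw [inter_comm]
  exact inter_subset_inter_right O (image_mono (prod_mono_left (singleton_subset_iff.2 ht)))

theorem im_crosscutCoord_mul_im_crosscutCoord_neg {a : ℂ} {β : ℝ → ℂ} (ha : ‖a‖ = 1)
    (hβc : ContinuousOn β (Icc p q)) (hβi : InjOn β (Icc p q)) (hβ : ∀ s ∈ Icc p q, ‖β s‖ = 1)
    (haβ : ∀ s ∈ Icc p q, β s ≠ a) (ht : t ∈ Ioo p q) :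
    (crosscutCoord a (β t) (β p)).im * (crosscutCoord a (β t) (β q)).im < 0 := by
  have htI : t ∈ Icc p q := Ioo_subset_Icc_self ht
  have hpq : p ≤ q := htI.1.trans htI.2
  have hcont : ContinuousOn (fun s => (crosscutCoord a (β t) (β s)).im) (Icc p q) :=
    Complex.continuous_im.comp_continuousOn (continuousOn_crosscutCoord.comp hβc haβ)
  have hinj : InjOn (fun s => (crosscutCoord a (β t) (β s)).im) (Icc p q) := fun s hs u hu h =>
    hβi hs hu (injOn_crosscutCoord (norm_ne_zero_iff.1 (by simp [ha])) (haβ t htI).symm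
      (haβ s hs) (haβ u hu)
      (Complex.ext (by simp [re_crosscutCoord ha (hβ t htI), hβ s hs, hβ u hu]) h))
  have hzero : (crosscutCoord a (β t) (β t)).im = 0 := by simp [crosscutCoord_self_right]
  rcases hcont.strictMonoOn_of_injOn_Icc' hpq hinj with hmono | hanti
  · exact mul_neg_of_neg_of_pos (hzero ▸ hmono (left_mem_Icc.2 hpq) htI ht.1)
      (hzero ▸ hmono htI (right_mem_Icc.2 hpq) ht.2)
  · exact mul_neg_of_pos_of_neg (hzero ▸ hanti (left_mem_Icc.2 hpq) htI ht.1)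
      (hzero ▸ hanti htI (right_mem_Icc.2 hpq) ht.2)

theorem not_isPreconnected_of_corners_mem_of_subset_closedBall
    (hψc : ContinuousOn ψ (Icc p q ×ˢ Icc (0 : ℝ) 1)) (hψi : InjOn ψ (Icc p q ×ˢ Icc (0 : ℝ) 1))
    (hψ : ∀ z ∈ Icc p q ×ˢ Icc (0 : ℝ) 1, ‖ψ z‖ ≤ 1)
    (hψh : ∀ z ∈ Icc p q ×ˢ ({0, 1} : Set ℝ), ‖ψ z‖ = 1) (ht : t ∈ Ioo p q)
    (hSball : ∀ z ∈ S, ‖z‖ ≤ 1) (hSt : Disjoint S (verticalCurve ψ t))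
    (hpS : ψ (p, 1) ∈ S) (hqS : ψ (q, 1) ∈ S) : ¬ IsPreconnected S := by
  intro hS
  have htI : t ∈ Icc p q := Ioo_subset_Icc_self ht
  have hpq : p ≤ q := htI.1.trans htI.2
  have htR : ∀ s : I, (t, (s : ℝ)) ∈ Icc p q ×ˢ Icc (0 : ℝ) 1 := fun s => ⟨htI, s.2⟩
  have htop : ∀ s ∈ Icc p q, (s, (1 : ℝ)) ∈ Icc p q ×ˢ Icc (0 : ℝ) 1 := fun s hs =>
    ⟨hs, right_mem_Icc.2 zero_le_one⟩
  have hne : ∀ s ∈ Icc p q, ψ (s, 1) ≠ ψ (t, 0) := fun s hs h =>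
    one_ne_zero (congrArg Prod.snd (hψi (htop s hs) (htR 0) h))
  have hsign := im_crosscutCoord_mul_im_crosscutCoord_neg (β := fun s => ψ (s, 1))
    (hψh (t, 0) ⟨htI, by simp⟩) (hψc.comp (by fun_prop) htop)
    (fun s hs u hu h => congrArg Prod.fst (hψi (htop s hs) (htop u hu) h))
    (fun s hs => hψh (s, 1) ⟨hs, by simp⟩) hne ht
  have hcurve : range (fun s : I => ψ (t, s)) ⊆ verticalCurve ψ t :=
    range_subset_iff.2 fun s => ⟨(t, s), ⟨rfl, s.2⟩, rfl⟩
  have hside : ∀ z ∈ S, ∀ w ∈ S, ‖z‖ = 1 → ‖w‖ = 1 →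
      0 < (crosscutCoord (ψ (t, 0)) (ψ (t, 1)) z).im →
      0 ≤ (crosscutCoord (ψ (t, 0)) (ψ (t, 1)) w).im := fun z hz w hw hz1 hw1 =>
    im_crosscutCoord_nonneg_of_isPreconnected (Γ := fun s : I => ψ (t, s))
      (hψc.comp_continuous (by fun_prop) htR) (fun s => hψ _ (htR s))
      (hψh _ ⟨htI, by simp⟩) (hψh _ ⟨htI, by simp⟩) (hne t htI).symm hS hSball
      (hSt.mono_right hcurve) hz hw hz1 hw1
  have hp1 : ‖ψ (p, 1)‖ = 1 := hψh _ ⟨left_mem_Icc.2 hpq, by simp⟩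
  have hq1 : ‖ψ (q, 1)‖ = 1 := hψh _ ⟨right_mem_Icc.2 hpq, by simp⟩
  rcases mul_neg_iff.1 hsign with ⟨hpos, hneg⟩ | ⟨hneg, hpos⟩
  · exact (hside _ hpS _ hqS hp1 hq1 hpos).not_gt hneg
  · exact (hside _ hqS _ hpS hq1 hp1 hpos).not_gt hneg

theorem frontier_image_closedBall_subset (hφc : ContinuousOn φ (closedBall 0 1))
    (hφi : InjOn φ (closedBall 0 1)) : frontier (φ '' closedBall 0 1) ⊆ φ '' sphere 0 1 := by
  rw [← frontier_closedBall 0 one_ne_zero]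
  exact frontier_image_subset_image_frontier Complex.finrank_real_complex
    (isCompact_closedBall 0 1) hφc hφi

theorem not_isPreconnected_of_corners_mem (hφc : ContinuousOn φ (closedBall 0 1))
    (hφi : InjOn φ (closedBall 0 1)) (hψc : ContinuousOn ψ (Icc p q ×ˢ Icc (0 : ℝ) 1))
    (hψi : InjOn ψ (Icc p q ×ˢ Icc (0 : ℝ) 1))
    (hψφ : ψ '' (Icc p q ×ˢ Icc (0 : ℝ) 1) ⊆ φ '' closedBall 0 1)
    (hψh : horizontalBoundary ψ p q ⊆ frontier (φ '' closedBall 0 1)) (ht : t ∈ Ioo p q)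
    (hSφ : S ⊆ φ '' closedBall 0 1) (hSt : Disjoint S (verticalCurve ψ t))
    (hpS : ψ (p, 1) ∈ S) (hqS : ψ (q, 1) ∈ S) : ¬ IsPreconnected S := by
  let χ := Function.invFunOn φ (closedBall 0 1)
  have hχc : ContinuousOn χ (φ '' closedBall 0 1) :=
    continuousOn_invFunOn_image (isCompact_closedBall 0 1) hφc hφi
  have hχi : InjOn χ (φ '' closedBall 0 1) := Function.invFunOn_injOn_image φ _
  have hχ : LeftInvOn χ φ (closedBall 0 1) := hφi.leftInvOn_invFunOn
  have hχball : ∀ z ∈ φ '' closedBall 0 1, ‖χ z‖ ≤ 1 := by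
    rintro _ ⟨z, hz, rfl⟩
    rw [hχ hz]
    exact mem_closedBall_zero_iff.1 hz
  have hχsphere : ∀ z ∈ φ '' sphere 0 1, ‖χ z‖ = 1 := by
    rintro _ ⟨z, hz, rfl⟩
    rw [hχ (sphere_subset_closedBall hz)]
    exact mem_sphere_zero_iff_norm.1 hz
  have hmaps : MapsTo ψ (Icc p q ×ˢ Icc (0 : ℝ) 1) (φ '' closedBall 0 1) :=
    mapsTo_iff_image_subset.2 hψφ
  have hcurve : verticalCurve ψ t ⊆ φ '' closedBall 0 1 := (image_mono
    (prod_mono_left (singleton_subset_iff.2 (Ioo_subset_Icc_self ht)))).trans hψφ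
  intro hS
  refine not_isPreconnected_of_corners_mem_of_subset_closedBall (ψ := χ ∘ ψ) (S := χ '' S)
    (hχc.comp hψc hmaps) (hχi.comp hψi hmaps) (fun z hz => hχball _ (hmaps hz))
    (fun z hz => hχsphere _ (frontier_image_closedBall_subset hφc hφi (hψh ⟨z, hz, rfl⟩))) ht
    (forall_mem_image.2 fun z hz => hχball z (hSφ hz)) ?_ (mem_image_of_mem χ hpS)
    (mem_image_of_mem χ hqS) (hS.image χ (hχc.mono hSφ))
  have himage : verticalCurve (χ ∘ ψ) t = χ '' verticalCurve ψ t := image_comp _ _ _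
  rw [himage, disjoint_iff_inter_eq_empty, ← hχi.image_inter hSφ hcurve, hSt.inter_eq, image_empty]

theorem nonempty_inter_verticalCurve_of_isPreconnected (hφc : ContinuousOn φ (closedBall 0 1))
    (hφi : InjOn φ (closedBall 0 1)) (hψc : ContinuousOn ψ (Icc p q ×ˢ Icc (0 : ℝ) 1))
    (hψi : InjOn ψ (Icc p q ×ˢ Icc (0 : ℝ) 1))
    (hψφ : ψ '' (Icc p q ×ˢ Icc (0 : ℝ) 1) ⊆ φ '' closedBall 0 1)
    (hψh : horizontalBoundary ψ p q ⊆ frontier (φ '' closedBall 0 1))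
    (hS : IsPreconnected S) (hSφ : S ⊆ φ '' closedBall 0 1) (ht₁ : t₁ ∈ Ico p t)
    (ht₂ : t₂ ∈ Ioc t q) (h₁ : (verticalCurve ψ t₁ ∩ S).Nonempty)
    (h₂ : (verticalCurve ψ t₂ ∩ S).Nonempty) : (verticalCurve ψ t ∩ S).Nonempty := by
  let left := ψ '' (Ico p t ×ˢ Icc (0 : ℝ) 1)
  let right := ψ '' (Ioc t q ×ˢ Icc (0 : ℝ) 1)
  have ht : t ∈ Ioo p q := ⟨ht₁.1.trans_lt ht₁.2, ht₂.1.trans_le ht₂.2⟩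
  have htI : t ∈ Icc p q := Ioo_subset_Icc_self ht
  have hIco : Ico p t ⊆ Icc p q := Ico_subset_Icc_self.trans (Icc_subset_Icc_right htI.2)
  have hIoc : Ioc t q ⊆ Icc p q := Ioc_subset_Icc_self.trans (Icc_subset_Icc_left htI.1)
  by_contra htS
  have hSt : Disjoint S (verticalCurve ψ t) :=
    (disjoint_iff_inter_eq_empty.2 (not_nonempty_iff_eq_empty.1 htS)).symm
  have hleft : (left ∩ S).Nonempty := h₁.mono (inter_subset_inter_left S
    (image_mono (prod_mono_left (singleton_subset_iff.2 ht₁))))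
  have hright : (right ∩ S).Nonempty := h₂.mono (inter_subset_inter_left S
    (image_mono (prod_mono_left (singleton_subset_iff.2 ht₂))))
  have hunion : IsPreconnected (left ∪ S ∪ right) :=
    ((isPreconnected_image_strip hψc hIco ordConnected_Ico).union' hleft hS).union'
      (hright.mono fun z hz => ⟨Or.inr hz.2, hz.1⟩)
      (isPreconnected_image_strip hψc hIoc ordConnected_Ioc)
  refine not_isPreconnected_of_corners_mem hφc hφi hψc hψi hψφ hψh ht
    (union_subset (union_subset ((image_mono (prod_mono_left hIco)).trans hψφ) hSφ)
      ((image_mono (prod_mono_left hIoc)).trans hψφ)) ?_ ?_ ?_ hunion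
  · exact ((disjoint_image_strip_verticalCurve hψi hIco htI fun h => h.2.false).union_left
      hSt).union_left (disjoint_image_strip_verticalCurve hψi hIoc htI fun h => h.1.false)
  · exact Or.inl (Or.inl ⟨(p, 1), ⟨left_mem_Ico.2 ht.1, right_mem_Icc.2 zero_le_one⟩, rfl⟩)
  · exact Or.inr ⟨(q, 1), ⟨right_mem_Ioc.2 ht.2, right_mem_Icc.2 zero_le_one⟩, rfl⟩

theorem verticalCurve_inter_frontier_subset (hψc : ContinuousOn ψ (Icc p q ×ˢ Icc (0 : ℝ) 1))
    (hψi : InjOn ψ (Icc p q ×ˢ Icc (0 : ℝ) 1)) (hψD : ψ '' (Icc p q ×ˢ Icc (0 : ℝ) 1) ⊆ D)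
    (ht : t ∈ Ioo p q) : verticalCurve ψ t ∩ frontier D ⊆ horizontalBoundary ψ p q := by
  rintro _ ⟨⟨⟨_, s⟩, ⟨rfl, hs⟩, rfl⟩, hfr⟩
  refine ⟨(_, s), ⟨Ioo_subset_Icc_self ht, ?_⟩, rfl⟩
  by_contra hs01
  have hsI : s ∈ Ioo (0 : ℝ) 1 := by
    rw [← Icc_sdiff_both]
    exact ⟨hs, hs01⟩
  refine hfr.2 (interior_mono hψD
    (image_interior_subset_interior_image (by simp) hψc hψi ⟨_, ?_, rfl⟩))
  rw [interior_prod_eq, interior_Icc, interior_Icc]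
  exact ⟨ht, hsI⟩

theorem nonempty_inter_verticalCurve_of_inter_frontier_subset
    (hφc : ContinuousOn φ (closedBall 0 1)) (hφi : InjOn φ (closedBall 0 1))
    (hψc : ContinuousOn ψ (Icc p q ×ˢ Icc (0 : ℝ) 1)) (hψi : InjOn ψ (Icc p q ×ˢ Icc (0 : ℝ) 1))
    (hψφ : ψ '' (Icc p q ×ˢ Icc (0 : ℝ) 1) ⊆ φ '' closedBall 0 1)
    (hψh : horizontalBoundary ψ p q ⊆ frontier (φ '' closedBall 0 1))
    (hO : IsPreconnected O) (hOfr : (O ∩ frontier (φ '' closedBall 0 1)).Nonempty)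
    (hC : IsPreconnected C) (hOC : O ∩ frontier (φ '' closedBall 0 1) ⊆ C)
    (hCfr : C ⊆ frontier (φ '' closedBall 0 1) \ horizontalBoundary ψ p q)
    (ht₁ : t₁ ∈ Ico p t) (ht₂ : t₂ ∈ Ioc t q) (h₁ : (verticalCurve ψ t₁ ∩ O).Nonempty)
    (h₂ : (verticalCurve ψ t₂ ∩ O).Nonempty) : (verticalCurve ψ t ∩ O).Nonempty := by
  have hD : IsClosed (φ '' closedBall 0 1) :=
    ((isCompact_closedBall 0 1).image_of_continuousOn hφc).isClosed
  have ht : t ∈ Ioo p q := ⟨ht₁.1.trans_lt ht₁.2, ht₂.1.trans_le ht₂.2⟩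
  have hmeet : ∀ s ∈ Icc p q, (verticalCurve ψ s ∩ O).Nonempty →
      (verticalCurve ψ s ∩ (O ∩ φ '' closedBall 0 1 ∪ C)).Nonempty := by
    rintro s hs ⟨z, hz, hzO⟩
    exact ⟨z, hz, Or.inl
      ⟨hzO, hψφ (image_mono (prod_mono_left (singleton_subset_iff.2 hs)) hz)⟩⟩
  obtain ⟨z, hzt, hzO | hzC⟩ := nonempty_inter_verticalCurve_of_isPreconnected hφc hφi hψc hψi
    hψφ hψh (isPreconnected_inter_union_of_frontier_subset hO hD hC hOC hOfr)
    (union_subset inter_subset_right fun z hz => hD.frontier_subset (hCfr hz).1) ht₁ ht₂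
    (hmeet t₁ ⟨ht₁.1, ht₁.2.le.trans ht.2.le⟩ h₁) (hmeet t₂ ⟨ht.1.le.trans ht₂.1.le, ht₂.2⟩ h₂)
  · exact ⟨z, hzt, hzO.1⟩
  · exact absurd (verticalCurve_inter_frontier_subset hψc hψi hψφ ht ⟨hzt, (hCfr hzC).1⟩)
      (hCfr hzC).2

end Rectangle

/-- **Buffer Lemma (topological).** Let `R = ψ([0,x]×[0,1])` be a topological rectangle
inside a closed Jordan disk `D` with horizontal boundary on `∂D`, and let `O` be a
connected set disjoint from the horizontal boundary of `R` and meeting `∂D` off it. Then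
(i) the set `T` of parameters of vertical curves meeting `O` has order-convex complement
in `[0,x]`, and if `T ≠ ∅` then `0 ∈ T` or `x ∈ T` (one or two buffers); (ii) if moreover
`O` meets only one connected component of `∂D` minus the horizontal boundary, then `T`
itself is order-convex (a single buffer). -/
theorem buffer_lemma
    (x : ℝ) (hx : 0 < x)
    (ψ : ℝ × ℝ → ℂ)
    (hψc : ContinuousOn ψ (Icc 0 x ×ˢ Icc (0:ℝ) 1))
    (hψi : Set.InjOn ψ (Icc 0 x ×ˢ Icc (0:ℝ) 1))
    (φ : ℂ → ℂ)
    (hφc : ContinuousOn φ (closedBall 0 1))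
    (hφi : Set.InjOn φ (closedBall 0 1))
    (hRD : ψ '' (Icc 0 x ×ˢ Icc (0:ℝ) 1) ⊆ φ '' closedBall 0 1)
    (hhb : ψ '' (Icc 0 x ×ˢ ({0, 1} : Set ℝ)) ⊆ frontier (φ '' closedBall 0 1))
    (O : Set ℂ)
    (hO : IsConnected O)
    (hO1 : Disjoint O (ψ '' (Icc 0 x ×ˢ ({0, 1} : Set ℝ))))
    (hO2 : (O ∩ (frontier (φ '' closedBall 0 1) \
        ψ '' (Icc 0 x ×ˢ ({0, 1} : Set ℝ)))).Nonempty) :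
    (∀ t₁ t t₂ : ℝ, t₁ ∈ Icc 0 x → t₂ ∈ Icc 0 x → t₁ < t → t < t₂ →
        ¬(ψ '' ({t₁} ×ˢ Icc (0:ℝ) 1) ∩ O).Nonempty →
        ¬(ψ '' ({t₂} ×ˢ Icc (0:ℝ) 1) ∩ O).Nonempty →
        ¬(ψ '' ({t} ×ˢ Icc (0:ℝ) 1) ∩ O).Nonempty) ∧
    ((∃ t ∈ Icc (0:ℝ) x, (ψ '' ({t} ×ˢ Icc (0:ℝ) 1) ∩ O).Nonempty) →
        (ψ '' ({(0:ℝ)} ×ˢ Icc (0:ℝ) 1) ∩ O).Nonempty ∨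
        (ψ '' ({x} ×ˢ Icc (0:ℝ) 1) ∩ O).Nonempty) ∧
    ((∃ z ∈ frontier (φ '' closedBall 0 1) \ ψ '' (Icc 0 x ×ˢ ({0, 1} : Set ℝ)),
        O ∩ (frontier (φ '' closedBall 0 1) \ ψ '' (Icc 0 x ×ˢ ({0, 1} : Set ℝ))) ⊆
          connectedComponentIn
            (frontier (φ '' closedBall 0 1) \ ψ '' (Icc 0 x ×ˢ ({0, 1} : Set ℝ))) z) →
      ∀ t₁ t t₂ : ℝ, t₁ ∈ Icc 0 x → t₂ ∈ Icc 0 x → t₁ < t → t < t₂ →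
        (ψ '' ({t₁} ×ˢ Icc (0:ℝ) 1) ∩ O).Nonempty →
        (ψ '' ({t₂} ×ˢ Icc (0:ℝ) 1) ∩ O).Nonempty →
        (ψ '' ({t} ×ˢ Icc (0:ℝ) 1) ∩ O).Nonempty) := by
  have hOint : ∀ t₁ t₂, t₁ ∈ Icc 0 x → t₂ ∈ Icc 0 x →
      ¬ O ⊆ interior (ψ '' (Icc t₁ t₂ ×ˢ Icc (0 : ℝ) 1)) := fun t₁ t₂ h₁ h₂ hsub =>
    let ⟨_, hzO, hzfr, _⟩ := hO2
    hzfr.2 (interior_mono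
      ((image_mono (prod_mono_left (Icc_subset_Icc h₁.1 h₂.2))).trans hRD) (hsub hzO))
  refine ⟨fun t₁ t t₂ ht₁ ht₂ h₁ h₂ hγ₁ hγ₂ hγ => ?_, fun ⟨t, ht, hγ⟩ => ?_,
    fun ⟨z, _, hOz⟩ t₁ t t₂ ht₁ ht₂ h₁ h₂ hγ₁ hγ₂ => ?_⟩
  · have hsub : Icc t₁ t₂ ⊆ Icc 0 x := Icc_subset_Icc ht₁.1 ht₂.2
    exact (nonempty_inter_side_of_nonempty_inter_verticalCurve (hψc.mono (prod_mono_left hsub))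
      (hψi.mono (prod_mono_left hsub)) hO.isPreconnected
      (hO1.mono_right (image_mono (prod_mono_left hsub))) (hOint t₁ t₂ ht₁ ht₂)
      ⟨h₁.le, h₂.le⟩ hγ).elim hγ₁ hγ₂
  · exact nonempty_inter_side_of_nonempty_inter_verticalCurve hψc hψi hO.isPreconnected hO1
      (hOint 0 x (left_mem_Icc.2 hx.le) (right_mem_Icc.2 hx.le)) ht hγ
  · exact nonempty_inter_verticalCurve_of_inter_frontier_subset hφc hφi hψc hψi hRD hhb
      hO.isPreconnected (hO2.mono (inter_subset_inter_right O sdiff_subset))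
      isPreconnected_connectedComponentIn
      (fun w hw => hOz ⟨hw.1, hw.2, disjoint_left.1 hO1 hw.1⟩)
      (connectedComponentIn_subset _ z) ⟨ht₁.1, h₁⟩ ⟨h₂, ht₂.2⟩ hγ₁ hγ₂
end
end
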